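/- Let β ∈ ℕ₀, ε ∈ (0,2) and c > 0. Then there exists a constant C > 0, depending only on β, c and ε, such that for all α, n ∈ ℕ₀ with 1 ≤ α ≤ c(1+n) and all x ∈ [−1+ε, 1], | ((1−x)/2)^{α/2} P_n^{(α,β)}(x) | ≤ C ( u² |x − x_tr| + α^{4/3} )^{−1/4}, where u := n + (α+β+1)/2 and x_tr := 1 − α²/(2u²). -/

import Mathlib

/-- Generalized binomial coefficient `C(t, j) = t(t-1)⋯(t-j+1)/j!`. -/
noncomputable def genChoose (t : ℝ) (j : ℕ) : ℝ :=
  (∏ i ∈ Finset.range j, (t - (i : ℝ))) / (Nat.factorial j : ℝ)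

/-- Jacobi polynomial
`P_n^{(α,β)}(x) = ∑_{s=0}^n C(n+α, n-s) C(n+β, s) ((x-1)/2)^s ((x+1)/2)^{n-s}`. -/
noncomputable def jacobi (α β : ℝ) (n : ℕ) (x : ℝ) : ℝ :=
  ∑ s ∈ Finset.range (n + 1),
    genChoose ((n : ℝ) + α) (n - s) * genChoose ((n : ℝ) + β) s *
      ((x - 1) / 2) ^ s * ((x + 1) / 2) ^ (n - s)

/-!
Put `u = n + (α + β + 1) / 2` and `D = (1 - x²) d/dx`. The Jacobi function `y`, that is
`P_n^{(α,β)}` times the square root of its weight, solves `D² y + W y = 0`, where `W` is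
`u² (1 + x) (x_tr - x)` up to a bounded error. With `a = α ^ (2 / 3)` and a large constant `k`, the
energy `m y² + (D y)² / m` is followed from left to right.

* At distance `k² / u²` from `-1` it is bounded: Sonin's monotonicity argument reduces this to the
  value of `P_n^{(α,β)}` at `-1`.
* From there to `x_tr - k² a² / u²` it is an adiabatic invariant for `m² = u² (1 + x) (x_tr - x)`.
* Across the transition window of width `k² a² / u²`, Gronwall's inequality with the constant
  frequency `m = a` loses a bounded factor only.
* Beyond `x_tr`, `y D y` increases to its value `0` at `1`, so `y²` decreases and `-W y⁴` is
  controlled by the energy at `x_tr`.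

Both parts of the claimed envelope come from these bounds. The finitely many degrees that are too
small for the argument are covered by compactness.
-/

open Set hiding antidiagonal mem_antidiagonal

section Gronwall

lemma antitoneOn_Icc_of_hasDerivAt_nonpos {f f' : ℝ → ℝ} {a b : ℝ}
    (hf : ContinuousOn f (Icc a b)) (hf' : ∀ x ∈ Ioo a b, HasDerivAt f (f' x) x)
    (hf'₀ : ∀ x ∈ Ioo a b, f' x ≤ 0) : AntitoneOn f (Icc a b) := by
  refine antitoneOn_of_hasDerivWithinAt_nonpos (f' := f') (convex_Icc a b) hf ?_ ?_ <;>
    rw [interior_Icc]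
  exacts [fun x hx => (hf' x hx).hasDerivWithinAt, hf'₀]

lemma le_exp_sub_mul_of_hasDerivAt_le_mul {f f' g g' : ℝ → ℝ} {a b : ℝ} (hab : a ≤ b)
    (hf : ∀ x ∈ Icc a b, HasDerivAt f (f' x) x) (hg : ∀ x ∈ Icc a b, HasDerivAt g (g' x) x)
    (hle : ∀ x ∈ Icc a b, f' x ≤ g' x * f x) : f b ≤ Real.exp (g b - g a) * f a := by
  have hd : ∀ x ∈ Icc a b, HasDerivAt (fun x => f x * Real.exp (-g x))
      (f' x * Real.exp (-g x) + f x * (Real.exp (-g x) * -g' x)) x :=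
    fun x hx => (hf x hx).mul (hg x hx).neg.exp
  have hanti : AntitoneOn (fun x => f x * Real.exp (-g x)) (Icc a b) :=
    antitoneOn_Icc_of_hasDerivAt_nonpos (fun x hx => (hd x hx).continuousAt.continuousWithinAt)
      (fun x hx => hd x (Ioo_subset_Icc_self hx)) fun x hx => by
        nlinarith [hle x (Ioo_subset_Icc_self hx), Real.exp_pos (-g x)]
  calc f b = Real.exp (g b) * (f b * Real.exp (-g b)) := by
        rw [mul_left_comm, ← Real.exp_add, add_neg_cancel, Real.exp_zero, mul_one]
    _ ≤ Real.exp (g b) * (f a * Real.exp (-g a)) := by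
        exact mul_le_mul_of_nonneg_left (hanti (left_mem_Icc.2 hab) (right_mem_Icc.2 hab) hab)
          (Real.exp_pos _).le
    _ = Real.exp (g b - g a) * f a := by
        rw [mul_left_comm, ← Real.exp_add, ← sub_eq_add_neg, mul_comm]

end Gronwall

section SturmLiouville

/-- `y` solves `D² y + W y = 0` on `s`, where `D = p d/dx`. The equation is encoded as a first order
system for `y` and `z = D y`. -/
structure IsSturmLiouvilleOn (p W y z : ℝ → ℝ) (s : Set ℝ) : Prop where
  hasDerivAt_fst : ∀ x ∈ s, HasDerivAt y (z x / p x) x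
  hasDerivAt_snd : ∀ x ∈ s, HasDerivAt z (-(W x * y x) / p x) x

/-- The energy of an oscillator of frequency `m` with position `y` and velocity `z`, divided by `m`
so that it is an adiabatic invariant. -/
noncomputable def oscEnergy (m y z : ℝ) : ℝ := m * y ^ 2 + z ^ 2 / m

/-- The corrected energy of the Liouville–Green estimate: the term `γ y z` cancels the first order
variation of `oscEnergy m y z` when `γ` is the relative rate of change of `m`. -/
noncomputable def modifiedEnergy (m γ y z : ℝ) : ℝ := oscEnergy m y z + γ * (y * z)

variable {p W m γ γ' ρ y z : ℝ → ℝ} {s : Set ℝ}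

lemma IsSturmLiouvilleOn.mono (h : IsSturmLiouvilleOn p W y z s) {s' : Set ℝ} (hs : s' ⊆ s) :
    IsSturmLiouvilleOn p W y z s' :=
  ⟨fun x hx => h.hasDerivAt_fst x (hs hx), fun x hx => h.hasDerivAt_snd x (hs hx)⟩

lemma two_mul_abs_mul_le_oscEnergy {m : ℝ} (hm : 0 < m) (y z : ℝ) :
    2 * |y * z| ≤ oscEnergy m y z := by
  have hid : oscEnergy m y z - 2 * |y * z| = (m * |y| - |z|) ^ 2 / m := by
    rw [oscEnergy, abs_mul, ← sq_abs y, ← sq_abs z]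
    field_simp
    ring
  linarith [show 0 ≤ (m * |y| - |z|) ^ 2 / m by positivity]

lemma oscEnergy_nonneg {m : ℝ} (hm : 0 < m) (y z : ℝ) : 0 ≤ oscEnergy m y z := by
  unfold oscEnergy
  positivity

lemma oscEnergy_le_mul_oscEnergy {m m' K : ℝ} (hm : 0 < m) (hm' : 0 < m') (h : m' ≤ K * m)
    (h' : m ≤ K * m') (y z : ℝ) : oscEnergy m' y z ≤ K * oscEnergy m y z := by
  have hz : z ^ 2 / m' ≤ K * (z ^ 2 / m) := by
    rw [← mul_div_assoc, div_le_div_iff₀ hm' hm, mul_comm K, mul_assoc]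
    gcongr
  rw [oscEnergy, oscEnergy, mul_add, ← mul_assoc]
  gcongr

lemma mul_sq_le_oscEnergy {m : ℝ} (hm : 0 < m) (y z : ℝ) : m * y ^ 2 ≤ oscEnergy m y z :=
  le_add_of_nonneg_right (by positivity)

lemma abs_modifiedEnergy_sub_oscEnergy_le {m γ : ℝ} (hm : 0 < m) (hγ : |γ| ≤ 1) (y z : ℝ) :
    |modifiedEnergy m γ y z - oscEnergy m y z| ≤ oscEnergy m y z / 2 := by
  rw [modifiedEnergy, add_sub_cancel_left, abs_mul]
  linarith [two_mul_abs_mul_le_oscEnergy hm y z, mul_le_mul_of_nonneg_right hγ (abs_nonneg (y * z))]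

/-- A Liouville–Green approximation on `s` of the potential `W` by the square of a positive
frequency `m`, with error `ρ`. The function `γ` is the relative rate of change `p m' / m²` of the
frequency, and `γ'` is its derivative. -/
structure IsLiouvilleGreenOn (p W m γ γ' ρ : ℝ → ℝ) (s : Set ℝ) : Prop where
  pos : ∀ x ∈ s, 0 < p x
  freq_pos : ∀ x ∈ s, 0 < m x
  hasDerivAt_freq : ∀ x ∈ s, HasDerivAt m (γ x * m x ^ 2 / p x) x
  hasDerivAt_rate : ∀ x ∈ s, HasDerivAt γ (γ' x) x
  rate_deriv_nonpos : ∀ x ∈ s, γ' x ≤ 0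
  potential_eq : ∀ x ∈ s, W x = m x ^ 2 - ρ x
  error_nonneg : ∀ x ∈ s, 0 ≤ ρ x

namespace IsLiouvilleGreenOn

lemma mono (hm : IsLiouvilleGreenOn p W m γ γ' ρ s) {s' : Set ℝ} (hs : s' ⊆ s) :
    IsLiouvilleGreenOn p W m γ γ' ρ s' :=
  ⟨fun x hx => hm.pos x (hs hx), fun x hx => hm.freq_pos x (hs hx),
    fun x hx => hm.hasDerivAt_freq x (hs hx), fun x hx => hm.hasDerivAt_rate x (hs hx),
    fun x hx => hm.rate_deriv_nonpos x (hs hx), fun x hx => hm.potential_eq x (hs hx),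
    fun x hx => hm.error_nonneg x (hs hx)⟩

lemma abs_rate_le_one {x₁ x₂ : ℝ} (hm : IsLiouvilleGreenOn p W m γ γ' ρ (Icc x₁ x₂))
    (hγ₁ : γ x₁ ≤ 1) (hγ₂ : -1 ≤ γ x₂) {x : ℝ} (hx : x ∈ Icc x₁ x₂) : |γ x| ≤ 1 := by
  have hanti : AntitoneOn γ (Icc x₁ x₂) := antitoneOn_Icc_of_hasDerivAt_nonpos
    (fun x hx => (hm.hasDerivAt_rate x hx).continuousAt.continuousWithinAt)
    (fun x hx => hm.hasDerivAt_rate x (Ioo_subset_Icc_self hx))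
    fun x hx => hm.rate_deriv_nonpos x (Ioo_subset_Icc_self hx)
  have hle : x₁ ≤ x₂ := hx.1.trans hx.2
  exact abs_le.2 ⟨hγ₂.trans (hanti hx (right_mem_Icc.2 hle) hx.2),
    (hanti (left_mem_Icc.2 hle) hx hx.1).trans hγ₁⟩

lemma hasDerivAt_modifiedEnergy (hm : IsLiouvilleGreenOn p W m γ γ' ρ s)
    (h : IsSturmLiouvilleOn p W y z s) {x : ℝ} (hx : x ∈ s) :
    HasDerivAt (fun x => modifiedEnergy (m x) (γ x) (y x) (z x))
      (γ' x * (y x * z x) + ρ x / p x * (2 * (y x * z x) / m x + γ x * y x ^ 2)) x := by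
  have hp₀ := (hm.pos x hx).ne'
  have hm₀ := (hm.freq_pos x hx).ne'
  have hdm := hm.hasDerivAt_freq x hx
  have hdy := h.hasDerivAt_fst x hx
  have hdz := h.hasDerivAt_snd x hx
  refine (((hdm.fun_mul (hdy.fun_pow 2)).fun_add ((hdz.fun_pow 2).fun_div hdm hm₀)).fun_add
    ((hm.hasDerivAt_rate x hx).fun_mul (hdy.fun_mul hdz))).congr_deriv ?_
  rw [hm.potential_eq x hx]
  field_simp
  ring

lemma deriv_modifiedEnergy_le (hm : IsLiouvilleGreenOn p W m γ γ' ρ s) {x : ℝ} (hx : x ∈ s)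
    (hγ : |γ x| ≤ 1) (y z : ℝ) :
    γ' x * (y * z) + ρ x / p x * (2 * (y * z) / m x + γ x * y ^ 2) ≤
      (-γ' x + 4 * ρ x / (p x * m x)) * modifiedEnergy (m x) (γ x) y z := by
  have hp₀ := hm.pos x hx
  have hm₀ := hm.freq_pos x hx
  have hρ := hm.error_nonneg x hx
  have hyz := two_mul_abs_mul_le_oscEnergy hm₀ y z
  have hB := (abs_le.1 (abs_modifiedEnergy_sub_oscEnergy_le hm₀ hγ y z)).1
  have hy := mul_sq_le_oscEnergy hm₀ y z
  set B := modifiedEnergy (m x) (γ x) y z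
  have h₁ : γ' x * (y * z) ≤ -γ' x * B := by
    have : 0 ≤ y * z + B := by linarith [neg_abs_le (y * z)]
    nlinarith [hm.rate_deriv_nonpos x hx]
  have h₂ : 2 * (y * z) / m x + γ x * y ^ 2 ≤ 4 * B / m x := by
    have : γ x * (m x * y ^ 2) ≤ 1 * (m x * y ^ 2) := by
      gcongr
      exact le_of_abs_le hγ
    rw [le_div_iff₀ hm₀, add_mul, div_mul_cancel₀ _ hm₀.ne']
    linarith [le_abs_self (y * z)]
  calc γ' x * (y * z) + ρ x / p x * (2 * (y * z) / m x + γ x * y ^ 2)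
      ≤ -γ' x * B + ρ x / p x * (4 * B / m x) := by gcongr
    _ = (-γ' x + 4 * ρ x / (p x * m x)) * B := by field_simp

lemma oscEnergy_le_exp_mul {G G' : ℝ → ℝ} {x₁ x₂ : ℝ}
    (hm : IsLiouvilleGreenOn p W m γ γ' ρ (Icc x₁ x₂))
    (h : IsSturmLiouvilleOn p W y z (Icc x₁ x₂))
    (hG : ∀ x ∈ Icc x₁ x₂, HasDerivAt G (G' x) x)
    (hG' : ∀ x ∈ Icc x₁ x₂, 4 * ρ x / (p x * m x) ≤ G' x)
    (hγ₁ : γ x₁ ≤ 1) (hγ₂ : -1 ≤ γ x₂) {x : ℝ} (hx : x ∈ Icc x₁ x₂) :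
    oscEnergy (m x) (y x) (z x) ≤
      3 * Real.exp (2 + (G x - G x₁)) * oscEnergy (m x₁) (y x₁) (z x₁) := by
  have hγ : ∀ w ∈ Icc x₁ x₂, |γ w| ≤ 1 := fun w => hm.abs_rate_le_one hγ₁ hγ₂
  have hB : ∀ w ∈ Icc x₁ x₂, |modifiedEnergy (m w) (γ w) (y w) (z w) -
      oscEnergy (m w) (y w) (z w)| ≤ oscEnergy (m w) (y w) (z w) / 2 := fun w hw =>
    abs_modifiedEnergy_sub_oscEnergy_le (hm.freq_pos w hw) (hγ w hw) _ _
  have hE : ∀ w ∈ Icc x₁ x₂, 0 ≤ oscEnergy (m w) (y w) (z w) := fun w hw =>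
    oscEnergy_nonneg (hm.freq_pos w hw) _ _
  have hsub : Icc x₁ x ⊆ Icc x₁ x₂ := Icc_subset_Icc_right hx.2
  have hx₁ : x₁ ∈ Icc x₁ x₂ := ⟨le_rfl, hx.1.trans hx.2⟩
  have hgronwall := le_exp_sub_mul_of_hasDerivAt_le_mul hx.1
    (fun w hw => hm.hasDerivAt_modifiedEnergy h (hsub hw))
    (fun w hw => (hm.hasDerivAt_rate w (hsub hw)).fun_neg.fun_add (hG w (hsub hw)))
    fun w hw => (hm.deriv_modifiedEnergy_le (hsub hw) (hγ w (hsub hw)) _ _).trans <| by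
      have hw' := hsub hw
      gcongr
      · linarith [abs_le.1 (hB w hw'), hE w hw']
      · exact hG' w hw'
  have hexp : Real.exp (-γ x + G x - (-γ x₁ + G x₁)) ≤ Real.exp (2 + (G x - G x₁)) :=
    Real.exp_le_exp.2 (by linarith [abs_le.1 (hγ x hx), abs_le.1 (hγ x₁ hx₁)])
  calc oscEnergy (m x) (y x) (z x) ≤ 2 * modifiedEnergy (m x) (γ x) (y x) (z x) := by
        linarith [abs_le.1 (hB x hx)]
    _ ≤ 2 * (Real.exp (2 + (G x - G x₁)) * (3 / 2 * oscEnergy (m x₁) (y x₁) (z x₁))) := by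
        refine mul_le_mul_of_nonneg_left (hgronwall.trans (mul_le_mul hexp ?_ ?_ ?_)) two_pos.le
        · linarith [abs_le.1 (hB x₁ hx₁)]
        · linarith [abs_le.1 (hB x₁ hx₁), hE x₁ hx₁]
        · positivity
    _ = _ := by ring

end IsLiouvilleGreenOn

namespace IsSturmLiouvilleOn

lemma oscEnergy_le_exp_mul_of_abs_le {a q Q x₁ x₂ : ℝ}
    (h : IsSturmLiouvilleOn p W y z (Icc x₁ x₂)) (ha : 0 < a) (hq : 0 < q)
    (hp : ∀ x ∈ Icc x₁ x₂, q ≤ p x) (hW : ∀ x ∈ Icc x₁ x₂, |W x| ≤ Q * a ^ 2) (hx : x₁ ≤ x₂) :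
    oscEnergy a (y x₂) (z x₂) ≤
      Real.exp ((1 + Q) * a / q * (x₂ - x₁)) * oscEnergy a (y x₁) (z x₁) := by
  have hQ : 0 ≤ Q := nonneg_of_mul_nonneg_left
    ((abs_nonneg _).trans (hW x₁ (left_mem_Icc.2 hx))) (by positivity)
  rw [mul_sub]
  refine le_exp_sub_mul_of_hasDerivAt_le_mul (f := fun x => oscEnergy a (y x) (z x)) hx
    (fun x hx => (((h.hasDerivAt_fst x hx).fun_pow 2).const_mul a).fun_add
      (((h.hasDerivAt_snd x hx).fun_pow 2).div_const a))
    (fun x _ => (hasDerivAt_id x).const_mul _) fun x hx => ?_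
  have hpx : 0 < p x := hq.trans_le (hp x hx)
  have hyz := two_mul_abs_mul_le_oscEnergy ha (y x) (z x)
  have hWyz : (a ^ 2 - W x) * (y x * z x) ≤ (1 + Q) * a ^ 2 * |y x * z x| := by
    refine (le_abs_self _).trans ?_
    rw [abs_mul]
    gcongr
    refine (abs_sub _ _).trans ?_
    rw [abs_of_pos (by positivity : 0 < a ^ 2)]
    linarith [hW x hx]
  calc _ = 2 * ((a ^ 2 - W x) * (y x * z x)) / (a * p x) := by
        field_simp
        ring
    _ ≤ 2 * ((1 + Q) * a ^ 2 * |y x * z x|) / (a * p x) := by gcongr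
    _ = (1 + Q) * a / p x * (2 * |y x * z x|) := by field_simp
    _ ≤ (1 + Q) * a / q * oscEnergy a (y x) (z x) := by
        gcongr
        exact hp x hx
    _ = _ := by ring

variable {W' : ℝ → ℝ} {t b : ℝ}

lemma neg_mul_sq_le_sq (h : IsSturmLiouvilleOn p W y z (Ioo t b)) (hp : ∀ x ∈ Ioo t b, p x ≠ 0)
    (hyc : ContinuousOn y (Icc t b)) (hzc : ContinuousOn z (Icc t b)) (hyb : y b = 0)
    (hWc : ContinuousOn W (Icc t b))
    (hW : ∀ x ∈ Ioo t b, HasDerivAt W (W' x) x) (hW' : ∀ x ∈ Ioo t b, W' x ≤ 0)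
    {x : ℝ} (hx : x ∈ Icc t b) : -W x * y x ^ 2 ≤ z x ^ 2 := by
  have hanti : AntitoneOn (fun x => z x ^ 2 + W x * y x ^ 2) (Icc t b) := by
    refine antitoneOn_Icc_of_hasDerivAt_nonpos (f' := fun x => W' x * y x ^ 2)
      (by fun_prop) (fun x hx => ?_)
      fun x hx => mul_nonpos_of_nonpos_of_nonneg (hW' x hx) (sq_nonneg _)
    have := hp x hx
    refine (((h.hasDerivAt_snd x hx).fun_pow 2).fun_add
      ((hW x hx).fun_mul ((h.hasDerivAt_fst x hx).fun_pow 2))).congr_deriv ?_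
    field_simp
    ring
  have hE := hanti hx (right_mem_Icc.2 (hx.1.trans hx.2)) hx.2
  simp only [hyb] at hE
  nlinarith [sq_nonneg (z b)]

lemma monotoneOn_mul (h : IsSturmLiouvilleOn p W y z (Ioo t b)) (hp : ∀ x ∈ Ioo t b, 0 < p x)
    (hyc : ContinuousOn y (Icc t b)) (hzc : ContinuousOn z (Icc t b))
    (hW₀ : ∀ x ∈ Ioo t b, W x ≤ 0) : MonotoneOn (fun x => y x * z x) (Icc t b) := by
  refine monotoneOn_of_hasDerivWithinAt_nonneg (f' := fun x => (z x ^ 2 - W x * y x ^ 2) / p x)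
    (convex_Icc t b) (hyc.mul hzc) ?_ ?_ <;> rw [interior_Icc]
  · exact fun x hx => (((h.hasDerivAt_fst x hx).fun_mul
      (h.hasDerivAt_snd x hx)).congr_deriv (by ring)).hasDerivWithinAt
  · exact fun x hx => div_nonneg (by nlinarith [hW₀ x hx, sq_nonneg (y x), sq_nonneg (z x)])
      (hp x hx).le

lemma antitoneOn_sq (h : IsSturmLiouvilleOn p W y z (Ioo t b)) (hp : ∀ x ∈ Ioo t b, 0 < p x)
    (hyc : ContinuousOn y (Icc t b)) (hyz : ∀ x ∈ Icc t b, y x * z x ≤ 0) :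
    AntitoneOn (fun x => y x ^ 2) (Icc t b) :=
  antitoneOn_Icc_of_hasDerivAt_nonpos (f' := fun x => 2 * (y x * z x) / p x) (hyc.pow 2)
    (fun x hx => ((h.hasDerivAt_fst x hx).fun_pow 2).congr_deriv (by ring))
    fun x hx => div_nonpos_of_nonpos_of_nonneg
      (by linarith [hyz x (Ioo_subset_Icc_self hx)]) (hp x hx).le

/-- Past the turning point, the conditions at `b` single out the recessive solution: `y z` is
increasing with limit zero, so `y` decays. -/
lemma sq_le_and_neg_mul_pow_four_le (h : IsSturmLiouvilleOn p W y z (Ioo t b))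
    (hp : ∀ x ∈ Ioo t b, 0 < p x) (hyc : ContinuousOn y (Icc t b)) (hzc : ContinuousOn z (Icc t b))
    (hyb : y b = 0) (hWc : ContinuousOn W (Icc t b))
    (hW : ∀ x ∈ Ioo t b, HasDerivAt W (W' x) x) (hW' : ∀ x ∈ Ioo t b, W' x ≤ 0) (hWt : W t ≤ 0)
    {x : ℝ} (hx : x ∈ Icc t b) :
    y x ^ 2 ≤ y t ^ 2 ∧ -W x * y x ^ 4 ≤ (y t * z t) ^ 2 := by
  have htb : t ≤ b := hx.1.trans hx.2
  have ht := left_mem_Icc.2 htb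
  have hWanti := antitoneOn_Icc_of_hasDerivAt_nonpos hWc hW hW'
  have hmono := h.monotoneOn_mul hp hyc hzc fun w hw =>
    (hWanti ht (Ioo_subset_Icc_self hw) hw.1.le).trans hWt
  have hyz : ∀ w ∈ Icc t b, y w * z w ≤ 0 := fun w hw => by
    simpa [hyb] using hmono hw (right_mem_Icc.2 htb) hw.2
  refine ⟨h.antitoneOn_sq hp hyc hyz ht hx hx.1, ?_⟩
  calc -W x * y x ^ 4 = y x ^ 2 * (-W x * y x ^ 2) := by ring
    _ ≤ y x ^ 2 * z x ^ 2 := by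
        gcongr
        exact h.neg_mul_sq_le_sq (fun w hw => (hp w hw).ne') hyc hzc hyb hWc hW hW' hx
    _ = (y x * z x) ^ 2 := by ring
    _ ≤ (y t * z t) ^ 2 := sq_le_sq.2 <| by
        rw [abs_of_nonpos (hyz x hx), abs_of_nonpos (hyz t ht)]
        exact neg_le_neg (hmono ht hx hx.1)

end IsSturmLiouvilleOn

end SturmLiouville

section JacobiPotential

/-- The potential of the Jacobi equation in Sturm–Liouville form, expanded around its approximate
turning point `t`. Here `u` is the large parameter of the asymptotic regime. -/
noncomputable def jacobiPotential (u t β x : ℝ) : ℝ :=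
  u ^ 2 * (1 + x) * (t - x) - (1 - x) * ((1 + x) / 4 + β ^ 2 / 2)

/-- The local frequency of the Jacobi equation: the square root of the leading part of
`jacobiPotential`. -/
noncomputable def jacobiFreq (u t x : ℝ) : ℝ := u * √(1 + x) * √(t - x)

/-- The relative rate of change `(1 - x²) m' / m²` of the frequency `m = jacobiFreq u t`, in the
sense of `IsLiouvilleGreenOn`. -/
noncomputable def jacobiFreqRate (u t x : ℝ) : ℝ :=
  (1 - x) * (t - 1 - 2 * x) / (2 * u * √(1 + x) * √(t - x) ^ 3)

/-- The derivative of `jacobiFreqRate`. -/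
noncomputable def jacobiFreqRateDeriv (u t x : ℝ) : ℝ :=
  (-(1 + t) ^ 2 + (1 + x) * (1 + t) * (2 - (1 + t) / 2) - (1 + x) ^ 2 * (4 - 2 * (1 + t))) /
    (2 * u * √(1 + x) ^ 3 * √(t - x) ^ 5)

variable {u t β x : ℝ}

lemma hasDerivAt_jacobiPotential (u t β x : ℝ) :
    HasDerivAt (jacobiPotential u t β) (u ^ 2 * (t - 1 - 2 * x) + (x + β ^ 2) / 2) x := by
  have h₁ := (hasDerivAt_id x).const_add 1
  refine (((h₁.const_mul (u ^ 2)).mul ((hasDerivAt_id x).const_sub t)).sub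
    (((hasDerivAt_id x).const_sub 1).mul ((h₁.div_const 4).add_const (β ^ 2 / 2)))).congr_deriv ?_
  simp only [id]
  ring

lemma mul_le_neg_jacobiPotential (hx : x ∈ Icc (-1) 1) :
    u ^ 2 * (1 + x) * (x - t) ≤ -jacobiPotential u t β x := by
  have : 0 ≤ (1 - x) * ((1 + x) / 4 + β ^ 2 / 2) :=
    mul_nonneg (by linarith [hx.2]) (by nlinarith [hx.1, sq_nonneg β])
  rw [jacobiPotential]
  linarith

lemma hasDerivAt_sqrt_one_add (hx : -1 < x) :
    HasDerivAt (fun x => √(1 + x)) (1 / (2 * √(1 + x))) x :=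
  ((hasDerivAt_id x).const_add 1).sqrt (by simp only [id]; linarith)

lemma hasDerivAt_sqrt_const_sub (hx : x < t) :
    HasDerivAt (fun x => √(t - x)) (-1 / (2 * √(t - x))) x :=
  ((hasDerivAt_id x).const_sub t).sqrt (by simp only [id]; linarith)

lemma jacobiFreq_pos (hu : 0 < u) (hx : x ∈ Ioo (-1) t) : 0 < jacobiFreq u t x :=
  mul_pos (mul_pos hu (Real.sqrt_pos.2 (by linarith [hx.1]))) (Real.sqrt_pos.2 (sub_pos.2 hx.2))

lemma jacobiFreq_sq (hx : x ∈ Icc (-1) t) :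
    jacobiFreq u t x ^ 2 = u ^ 2 * (1 + x) * (t - x) := by
  rw [jacobiFreq, mul_pow, mul_pow, Real.sq_sqrt (by linarith [hx.1]),
    Real.sq_sqrt (sub_nonneg.2 hx.2)]

lemma hasDerivAt_jacobiFreq (hu : 0 < u) (ht : t ≤ 1) (hx : x ∈ Ioo (-1) t) :
    HasDerivAt (jacobiFreq u t)
      (jacobiFreqRate u t x * jacobiFreq u t x ^ 2 / (1 - x ^ 2)) x := by
  have hr : 0 < √(1 + x) := Real.sqrt_pos.2 (by linarith [hx.1])
  have hs : 0 < √(t - x) := Real.sqrt_pos.2 (by linarith [hx.2])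
  have er : √(1 + x) ^ 2 = 1 + x := Real.sq_sqrt (by linarith [hx.1])
  have es : √(t - x) ^ 2 = t - x := Real.sq_sqrt (by linarith [hx.2])
  have hx₁ : 1 - x ≠ 0 := by linarith [hx.2]
  refine (((hasDerivAt_sqrt_one_add hx.1).const_mul u).mul
    (hasDerivAt_sqrt_const_sub hx.2)).congr_deriv ?_
  rw [jacobiFreqRate, jacobiFreq, show 1 - x ^ 2 = (1 - x) * √(1 + x) ^ 2 by rw [er]; ring]
  field_simp
  linear_combination es - er

lemma hasDerivAt_jacobiFreqRate (hu : 0 < u) (hx : x ∈ Ioo (-1) t) :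
    HasDerivAt (jacobiFreqRate u t) (jacobiFreqRateDeriv u t x) x := by
  have hr : 0 < √(1 + x) := Real.sqrt_pos.2 (by linarith [hx.1])
  have hs : 0 < √(t - x) := Real.sqrt_pos.2 (by linarith [hx.2])
  have hnum : HasDerivAt (fun x : ℝ => (1 - x) * (t - 1 - 2 * x))
      (-1 * (t - 1 - 2 * x) + (1 - x) * -(2 * 1)) x :=
    ((hasDerivAt_id x).const_sub 1).mul (((hasDerivAt_id x).const_mul 2).const_sub (t - 1))
  have hden := ((hasDerivAt_sqrt_one_add hx.1).const_mul (2 * u)).fun_mul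
    ((hasDerivAt_sqrt_const_sub hx.2).fun_pow 3)
  refine (hnum.div hden (by positivity)).congr_deriv ?_
  have er : √(1 + x) ^ 2 = 1 + x := Real.sq_sqrt (by linarith [hx.1])
  have es : √(t - x) ^ 2 = t - x := Real.sq_sqrt (by linarith [hx.2])
  rw [jacobiFreqRateDeriv]
  generalize √(1 + x) = r at *
  generalize √(t - x) = s at *
  obtain rfl : x = r ^ 2 - 1 := by linarith
  obtain rfl : t = s ^ 2 + r ^ 2 - 1 := by linarith
  field_simp
  ring

lemma jacobiFreqRateDeriv_nonpos (hu : 0 < u) (ht : t ≤ 1) (hx : x ∈ Ioo (-1) t) :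
    jacobiFreqRateDeriv u t x ≤ 0 := by
  refine div_nonpos_of_nonpos_of_nonneg ?_ (by positivity)
  obtain ⟨hx₁, hx₂⟩ := hx
  obtain ⟨p, rfl⟩ : ∃ p, x = p - 1 := ⟨x + 1, by ring⟩
  obtain ⟨q, rfl⟩ : ∃ q, t = q - 1 := ⟨t + 1, by ring⟩
  have h₁ : 0 ≤ (2 - q) * ((q - p) ^ 2 + 3 * p ^ 2) :=
    mul_nonneg (by linarith) (by positivity)
  have h₂ : 0 ≤ q * (q * (q - p)) :=
    mul_nonneg (by linarith) (mul_nonneg (by linarith) (by linarith))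
  linarith

lemma isLiouvilleGreenOn_jacobi (hu : 0 < u) (ht : t ≤ 1) (β : ℝ) :
    IsLiouvilleGreenOn (fun x => 1 - x ^ 2) (jacobiPotential u t β) (jacobiFreq u t)
      (jacobiFreqRate u t) (jacobiFreqRateDeriv u t)
      (fun x => (1 - x) * ((1 + x) / 4 + β ^ 2 / 2)) (Ioo (-1) t) where
  pos x hx := by nlinarith [hx.1, hx.2]
  freq_pos _ := jacobiFreq_pos hu
  hasDerivAt_freq _ := hasDerivAt_jacobiFreq hu ht
  hasDerivAt_rate _ := hasDerivAt_jacobiFreqRate hu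
  rate_deriv_nonpos _ := jacobiFreqRateDeriv_nonpos hu ht
  potential_eq x hx := by rw [jacobiFreq_sq (Ioo_subset_Icc_self hx), jacobiPotential]
  error_nonneg x hx := mul_nonneg (by linarith [hx.2]) (by nlinarith [hx.1, sq_nonneg β])

lemma hasDerivAt_sqrt_div_sqrt (hx : x ∈ Ioo (-1) t) :
    HasDerivAt (fun x => √(t - x) / √(1 + x))
      (-((1 + t) / (2 * (1 + x) * (√(1 + x) * √(t - x))))) x := by
  have hr : 0 < √(1 + x) := Real.sqrt_pos.2 (by linarith [hx.1])
  have hs : 0 < √(t - x) := Real.sqrt_pos.2 (by linarith [hx.2])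
  have er : √(1 + x) ^ 2 = 1 + x := Real.sq_sqrt (by linarith [hx.1])
  have es : √(t - x) ^ 2 = t - x := Real.sq_sqrt (by linarith [hx.2])
  refine ((hasDerivAt_sqrt_const_sub hx.2).fun_div (hasDerivAt_sqrt_one_add hx.1)
    hr.ne').congr_deriv ?_
  rw [show 1 + t = √(1 + x) ^ 2 + √(t - x) ^ 2 by linarith, ← er, Real.sqrt_sq hr.le]
  field_simp
  ring

lemma IsSturmLiouvilleOn.oscEnergy_jacobiFreq_le {y z : ℝ → ℝ} {x₁ x₂ : ℝ}
    (h : IsSturmLiouvilleOn (fun x => 1 - x ^ 2) (jacobiPotential u t β) y z (Ioo (-1) t))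
    (hu : 0 < u) (ht : t ≤ 1) (hx₁ : -1 < x₁) (hx₂ : x₂ < t)
    (hγ₁ : jacobiFreqRate u t x₁ ≤ 1) (hγ₂ : -1 ≤ jacobiFreqRate u t x₂) (hx : x ∈ Icc x₁ x₂) :
    oscEnergy (jacobiFreq u t x) (y x) (z x) ≤
      3 * Real.exp (2 + 4 * (1 + β ^ 2) / (u * (1 + t)) * (√(t - x₁) / √(1 + x₁))) *
        oscEnergy (jacobiFreq u t x₁) (y x₁) (z x₁) := by
  have hsub : Icc x₁ x₂ ⊆ Ioo (-1) t := Icc_subset_Ioo hx₁ hx₂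
  have hm := isLiouvilleGreenOn_jacobi hu ht β
  have ht₁ : 0 < 1 + t := by linarith [(hsub hx).1, (hsub hx).2]
  set K := 4 * (1 + β ^ 2) / (u * (1 + t)) with hK
  have hG : ∀ w ∈ Icc x₁ x₂, HasDerivAt (fun x => -K * (√(t - x) / √(1 + x)))
      (2 * (1 + β ^ 2) / ((1 + w) * jacobiFreq u t w)) w := fun w hw => by
    have := (hm.freq_pos w (hsub hw)).ne'
    refine ((hasDerivAt_sqrt_div_sqrt (hsub hw)).const_mul (-K)).congr_deriv ?_
    rw [hK, jacobiFreq]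
    field_simp
    ring
  have hG' : ∀ w ∈ Icc x₁ x₂, 4 * ((1 - w) * ((1 + w) / 4 + β ^ 2 / 2)) /
      ((1 - w ^ 2) * jacobiFreq u t w) ≤ 2 * (1 + β ^ 2) / ((1 + w) * jacobiFreq u t w) :=
    fun w hw => by
      have hm₀ := hm.freq_pos w (hsub hw)
      have hw₁ : 0 < 1 + w := by linarith [(hsub hw).1]
      have hw₂ : 0 < 1 - w := by linarith [(hsub hw).2]
      rw [show 1 - w ^ 2 = (1 - w) * (1 + w) by ring,
        div_le_div_iff₀ (by positivity) (by positivity)]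
      have : 4 * ((1 + w) / 4 + β ^ 2 / 2) ≤ 2 * (1 + β ^ 2) := by linarith
      calc _ = 4 * ((1 + w) / 4 + β ^ 2 / 2) * ((1 - w) * (1 + w) * jacobiFreq u t w) := by ring
        _ ≤ _ := by gcongr
  refine ((hm.mono hsub).oscEnergy_le_exp_mul (h.mono hsub) hG hG' hγ₁ hγ₂ hx).trans ?_
  gcongr
  · exact oscEnergy_nonneg (hm.freq_pos _ (hsub ⟨le_rfl, hx.1.trans hx.2⟩)) _ _
  · linarith [show 0 ≤ K * (√(t - x) / √(1 + x)) by positivity]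

end JacobiPotential

section TurningRegime

/-- The parameters for which the Jacobi potential is analysed: `δ` bounds the turning point `t` away
from `-1`, `k` is a large constant, and `k² a² / u²` is the width of the turning region, where
`a³ = 2 u² (1 - t)`. -/
structure IsTurningRegime (β δ k u t a : ℝ) : Prop where
  delta_pos : 0 < δ
  two_le : 2 ≤ k
  one_add_sq_le : 1 + β ^ 2 ≤ k ^ 2
  eight_le : 8 ≤ k ^ 2 * δ
  param_pos : 0 < u
  one_le : 1 ≤ a
  cube_eq : a ^ 3 = 2 * u ^ 2 * (1 - t)
  delta_le : δ ≤ 1 + t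
  width_le : (k * a / u) ^ 2 ≤ δ / 2

/-- The left end of the oscillatory region. -/
noncomputable def leftNode (k u : ℝ) : ℝ := -1 + (k / u) ^ 2

/-- The right end of the oscillatory region. -/
noncomputable def rightNode (k u t a : ℝ) : ℝ := t - (k * a / u) ^ 2

/-- The growth factor of the energy over the oscillatory region. -/
noncomputable def oscillatoryConst (β δ k : ℝ) : ℝ :=
  3 * Real.exp (2 + 4 * (1 + β ^ 2) / δ) * (2 * k)

/-- The growth factor of the energy over the oscillatory and turning regions. -/
noncomputable def turningConst (β δ k : ℝ) : ℝ :=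
  Real.exp (4 * k ^ 2 * (2 + 2 * k ^ 2 + β ^ 2) / δ) * (2 * k * oscillatoryConst β δ k)

namespace IsTurningRegime

variable {β δ k u t a : ℝ}

lemma turningPoint_lt_one (h : IsTurningRegime β δ k u t a) : t < 1 := by
  have : 0 < 2 * u ^ 2 * (1 - t) := h.cube_eq ▸ pow_pos (one_pos.trans_le h.one_le) 3
  linarith [pos_of_mul_pos_right this (by positivity)]

lemma leftNode_le (h : IsTurningRegime β δ k u t a) : leftNode k u ≤ -1 + δ / 2 := by
  have hk := h.two_le
  have hu := h.param_pos
  refine add_le_add_right (le_trans ?_ h.width_le) _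
  gcongr
  exact le_mul_of_one_le_right (by linarith) h.one_le

lemma two_mul_sq_le (h : IsTurningRegime β δ k u t a) : 2 * k ^ 2 ≤ u ^ 2 * δ := by
  have hu := h.param_pos
  have hwidth := h.width_le
  rw [div_pow, div_le_iff₀ (by positivity), mul_pow] at hwidth
  nlinarith [one_le_pow₀ h.one_le (n := 2), sq_nonneg k]

lemma neg_one_lt_leftNode (h : IsTurningRegime β δ k u t a) : -1 < leftNode k u :=
  lt_add_of_pos_right _ (sq_pos_of_pos (div_pos (two_pos.trans_le h.two_le) h.param_pos))

lemma le_rightNode (h : IsTurningRegime β δ k u t a) : -1 + δ / 2 ≤ rightNode k u t a := by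
  rw [rightNode]
  linarith [h.width_le, h.delta_le]

lemma leftNode_le_rightNode (h : IsTurningRegime β δ k u t a) :
    leftNode k u ≤ rightNode k u t a := h.leftNode_le.trans h.le_rightNode

lemma rightNode_lt (h : IsTurningRegime β δ k u t a) : rightNode k u t a < t :=
  sub_lt_self _ (sq_pos_of_pos (div_pos (mul_pos (two_pos.trans_le h.two_le)
    (one_pos.trans_le h.one_le)) h.param_pos))

lemma two_le_mul_sqrt (h : IsTurningRegime β δ k u t a) {v : ℝ} (hv : δ / 2 ≤ v) :
    2 ≤ k * √v := by
  have hδ := h.delta_pos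
  have hk : 0 ≤ k := two_pos.le.trans h.two_le
  refine le_of_sq_le_sq ?_ (by positivity)
  rw [mul_pow, Real.sq_sqrt (by linarith)]
  nlinarith [h.eight_le, mul_le_mul_of_nonneg_left hv (sq_nonneg k)]

lemma sqrt_one_add_leftNode (h : IsTurningRegime β δ k u t a) :
    √(1 + leftNode k u) = k / u := by
  rw [leftNode, add_neg_cancel_left,
    Real.sqrt_sq (div_nonneg (two_pos.le.trans h.two_le) h.param_pos.le)]

lemma sqrt_sub_rightNode (h : IsTurningRegime β δ k u t a) :
    √(t - rightNode k u t a) = k * a / u := by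
  rw [rightNode, sub_sub_cancel, Real.sqrt_sq (div_nonneg (mul_nonneg
    (two_pos.le.trans h.two_le) (one_pos.le.trans h.one_le)) h.param_pos.le)]

lemma jacobiFreq_leftNode (h : IsTurningRegime β δ k u t a) :
    jacobiFreq u t (leftNode k u) = k * √(t - leftNode k u) := by
  rw [jacobiFreq, h.sqrt_one_add_leftNode, mul_div_cancel₀ _ h.param_pos.ne']

lemma jacobiFreq_rightNode (h : IsTurningRegime β δ k u t a) :
    jacobiFreq u t (rightNode k u t a) = k * √(1 + rightNode k u t a) * a := by
  have := h.param_pos.ne'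
  rw [jacobiFreq, h.sqrt_sub_rightNode]
  field_simp

lemma jacobiFreqRate_leftNode_le (h : IsTurningRegime β δ k u t a) :
    jacobiFreqRate u t (leftNode k u) ≤ 1 := by
  have hu := h.param_pos
  have hk := two_pos.trans_le h.two_le
  have ht := h.turningPoint_lt_one
  have hlt := h.leftNode_le_rightNode.trans_lt h.rightNode_lt
  have hks := h.two_le_mul_sqrt (v := t - leftNode k u)
    (by linarith [h.leftNode_le, h.delta_le, h.delta_pos])
  have hleft := h.neg_one_lt_leftNode
  rw [jacobiFreqRate, h.sqrt_one_add_leftNode]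
  set x₁ := leftNode k u
  have hs : √(t - x₁) ^ 2 = t - x₁ := Real.sq_sqrt (by linarith)
  have : 0 < √(t - x₁) := Real.sqrt_pos.2 (by linarith)
  rw [show 2 * u * (k / u) * √(t - x₁) ^ 3 = 2 * (k * √(t - x₁)) * √(t - x₁) ^ 2 by field_simp,
    div_le_one (by positivity), hs]
  calc (1 - x₁) * (t - 1 - 2 * x₁) ≤ 2 * 2 * (t - x₁) := by nlinarith
    _ ≤ 2 * (k * √(t - x₁)) * (t - x₁) := by gcongr

lemma neg_one_le_jacobiFreqRate_rightNode (h : IsTurningRegime β δ k u t a) :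
    -1 ≤ jacobiFreqRate u t (rightNode k u t a) := by
  have hu := h.param_pos
  have hk := two_pos.trans_le h.two_le
  have ha := one_pos.trans_le h.one_le
  have hkr := h.two_le_mul_sqrt (v := 1 + rightNode k u t a) (by linarith [h.le_rightNode])
  have hx₂ : 1 - rightNode k u t a ≤ (1 / 2 + k ^ 2) * (a ^ 3 / u ^ 2) := by
    have ht : 1 - t = 1 / 2 * (a ^ 3 / u ^ 2) := by rw [h.cube_eq]; field_simp
    have : (k * a / u) ^ 2 ≤ k ^ 2 * (a ^ 3 / u ^ 2) := by
      rw [div_pow, mul_pow, mul_div_assoc]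
      gcongr
      · exact h.one_le
      · norm_num
    rw [rightNode]
    linarith
  have hlt := h.rightNode_lt.trans h.turningPoint_lt_one
  rw [jacobiFreqRate, h.sqrt_sub_rightNode]
  set x₂ := rightNode k u t a
  have hδ := h.delta_pos
  have hr : √(1 + x₂) ^ 2 = 1 + x₂ := Real.sq_sqrt (by linarith [h.le_rightNode])
  have hr₀ : 0 < √(1 + x₂) := pos_of_mul_pos_right (two_pos.trans_le hkr) hk.le
  set r := √(1 + x₂)
  have hr₂ : r ≤ 3 / 2 := by nlinarith
  have hpoly : (1 / 2 + k ^ 2) * r ≤ 2 * k ^ 3 := by nlinarith [h.two_le, sq_nonneg k]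
  rw [le_div_iff₀ (by positivity)]
  have key : (1 - x₂) * r ^ 2 ≤ 2 * k ^ 3 * (a ^ 3 / u ^ 2 * r) := calc
    (1 - x₂) * r ^ 2 ≤ (1 / 2 + k ^ 2) * (a ^ 3 / u ^ 2) * r ^ 2 := by gcongr
    _ = (1 / 2 + k ^ 2) * r * (a ^ 3 / u ^ 2 * r) := by ring
    _ ≤ _ := by gcongr
  have hden : 2 * u * r * (k * a / u) ^ 3 = 2 * k ^ 3 * (a ^ 3 / u ^ 2 * r) := by field_simp
  nlinarith [h.rightNode_lt]

variable {y z : ℝ → ℝ} {x : ℝ}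

lemma oscEnergy_le_of_mem_oscillatory (h : IsTurningRegime β δ k u t a)
    (hsys : IsSturmLiouvilleOn (fun x => 1 - x ^ 2) (jacobiPotential u t β) y z (Ioo (-1) 1))
    (hx : x ∈ Icc (leftNode k u) (rightNode k u t a)) :
    oscEnergy (jacobiFreq u t x) (y x) (z x) ≤
      oscillatoryConst β δ k * oscEnergy 1 (y (leftNode k u)) (z (leftNode k u)) := by
  have hu := h.param_pos
  have hk := two_pos.trans_le h.two_le
  have hδ := h.delta_pos
  have ht := h.turningPoint_lt_one
  have hks := h.two_le_mul_sqrt (v := t - leftNode k u) (by linarith [h.leftNode_le, h.delta_le])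
  have hleft := h.neg_one_lt_leftNode
  refine ((hsys.mono (Ioo_subset_Ioo_right ht.le)).oscEnergy_jacobiFreq_le hu ht.le hleft
    h.rightNode_lt h.jacobiFreqRate_leftNode_le h.neg_one_le_jacobiFreqRate_rightNode hx).trans ?_
  rw [h.jacobiFreq_leftNode, h.sqrt_one_add_leftNode, oscillatoryConst,
    mul_assoc (3 * Real.exp (2 + 4 * (1 + β ^ 2) / δ))]
  set x₁ := leftNode k u
  have hs : √(t - x₁) ≤ 2 := Real.sqrt_le_iff.2 ⟨by norm_num, by linarith⟩
  gcongr
  · exact oscEnergy_nonneg (by linarith) _ _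
  · calc 4 * (1 + β ^ 2) / (u * (1 + t)) * (√(t - x₁) / (k / u))
        = 4 * (1 + β ^ 2) / (1 + t) * (√(t - x₁) / k) := by
          have : 1 + t ≠ 0 := by linarith [h.delta_le]
          field_simp
      _ ≤ 4 * (1 + β ^ 2) / δ * 1 := by
          gcongr
          · exact h.delta_le
          · exact (div_le_one hk).2 (hs.trans h.two_le)
      _ = _ := mul_one _
  · exact oscEnergy_le_mul_oscEnergy one_pos (by linarith) (by nlinarith)
      (by nlinarith [h.two_le]) _ _

lemma abs_jacobiPotential_le (h : IsTurningRegime β δ k u t a)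
    (hx : x ∈ Icc (rightNode k u t a) t) :
    |jacobiPotential u t β x| ≤ (1 + 2 * k ^ 2 + β ^ 2) * a ^ 2 := by
  have ha := h.one_le
  have hx₁ : 0 ≤ 1 + x := by linarith [h.le_rightNode, h.delta_pos, hx.1]
  have hx₂ : 0 ≤ 1 - x := by linarith [h.turningPoint_lt_one, hx.2]
  have hmain : u ^ 2 * (1 + x) * (t - x) ≤ 2 * k ^ 2 * a ^ 2 := calc
    u ^ 2 * (1 + x) * (t - x) ≤ u ^ 2 * 2 * (k * a / u) ^ 2 := by
      gcongr
      · exact sub_nonneg.2 hx.2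
      · linarith
      · linarith [hx.1.trans_eq' (show t - (k * a / u) ^ 2 = _ from rfl)]
    _ = 2 * k ^ 2 * a ^ 2 := by
      have := h.param_pos.ne'
      field_simp
  have hmain₀ : 0 ≤ u ^ 2 * (1 + x) * (t - x) :=
    mul_nonneg (by positivity) (sub_nonneg.2 hx.2)
  have herr : (1 - x) * ((1 + x) / 4 + β ^ 2 / 2) ≤ (1 + β ^ 2) * a ^ 2 := calc
    (1 - x) * ((1 + x) / 4 + β ^ 2 / 2) ≤ 1 + β ^ 2 := by nlinarith [sq_nonneg β]
    _ ≤ _ := le_mul_of_one_le_right (by positivity) (one_le_pow₀ ha)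
  have herr₀ : 0 ≤ (1 - x) * ((1 + x) / 4 + β ^ 2 / 2) := by positivity
  have : 0 ≤ k ^ 2 * a ^ 2 := by positivity
  have : 0 ≤ (1 + β ^ 2) * a ^ 2 := by positivity
  rw [jacobiPotential, abs_le]
  constructor <;> linarith

lemma oscEnergy_rightNode_le (h : IsTurningRegime β δ k u t a)
    (hsys : IsSturmLiouvilleOn (fun x => 1 - x ^ 2) (jacobiPotential u t β) y z (Ioo (-1) 1)) :
    oscEnergy a (y (rightNode k u t a)) (z (rightNode k u t a)) ≤
      2 * k * oscillatoryConst β δ k * oscEnergy 1 (y (leftNode k u)) (z (leftNode k u)) := by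
  have hk := h.two_le
  have ha := one_pos.trans_le h.one_le
  have hkr := h.two_le_mul_sqrt (v := 1 + rightNode k u t a) (by linarith [h.le_rightNode])
  have hr : √(1 + rightNode k u t a) ≤ 2 :=
    Real.sqrt_le_iff.2 ⟨by norm_num, by linarith [h.rightNode_lt, h.turningPoint_lt_one]⟩
  have hstart := h.oscEnergy_le_of_mem_oscillatory hsys ⟨h.leftNode_le_rightNode, le_rfl⟩
  rw [h.jacobiFreq_rightNode] at hstart
  rw [mul_assoc (2 * k)]
  refine (oscEnergy_le_mul_oscEnergy (K := 2 * k) (m := k * √(1 + rightNode k u t a) * a)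
    (by nlinarith) ha ?_ ?_ _ _).trans (by gcongr)
  · nlinarith [mul_le_mul_of_nonneg_right hkr ha.le]
  · nlinarith [mul_le_mul_of_nonneg_left hr (by positivity : 0 ≤ k * a)]

lemma turning_exponent_le (h : IsTurningRegime β δ k u t a) (hx : x ≤ t) :
    (1 + (1 + 2 * k ^ 2 + β ^ 2)) * a / (δ / 2 * (1 - t)) * (x - rightNode k u t a) ≤
      4 * k ^ 2 * (2 + 2 * k ^ 2 + β ^ 2) / δ := by
  have hu := h.param_pos
  have ha := one_pos.trans_le h.one_le
  have hδ := h.delta_pos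
  have ht : 0 < 1 - t := sub_pos.2 h.turningPoint_lt_one
  calc (1 + (1 + 2 * k ^ 2 + β ^ 2)) * a / (δ / 2 * (1 - t)) * (x - rightNode k u t a)
      ≤ (1 + (1 + 2 * k ^ 2 + β ^ 2)) * a / (δ / 2 * (1 - t)) * (k * a / u) ^ 2 := by
        gcongr
        rw [rightNode]
        linarith
    _ = (2 + 2 * k ^ 2 + β ^ 2) * (2 * k ^ 2 / (δ * (u ^ 2 * (1 - t)))) * a ^ 3 := by
        field_simp
        ring
    _ = 4 * k ^ 2 * (2 + 2 * k ^ 2 + β ^ 2) / δ := by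
        rw [h.cube_eq]
        field_simp
        ring

lemma oscEnergy_le_of_mem_turning (h : IsTurningRegime β δ k u t a)
    (hsys : IsSturmLiouvilleOn (fun x => 1 - x ^ 2) (jacobiPotential u t β) y z (Ioo (-1) 1))
    (hx : x ∈ Icc (rightNode k u t a) t) :
    oscEnergy a (y x) (z x) ≤
      turningConst β δ k * oscEnergy 1 (y (leftNode k u)) (z (leftNode k u)) := by
  have ha := one_pos.trans_le h.one_le
  have hδ := h.delta_pos
  have ht := h.turningPoint_lt_one
  have hright := h.le_rightNode
  have hsub : Icc (rightNode k u t a) x ⊆ Ioo (-1) 1 :=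
    Icc_subset_Ioo (by linarith) (hx.2.trans_lt ht)
  have hp : ∀ w ∈ Icc (rightNode k u t a) x, δ / 2 * (1 - t) ≤ 1 - w ^ 2 := fun w hw => by
    rw [show 1 - w ^ 2 = (1 + w) * (1 - w) by ring]
    exact mul_le_mul (by linarith [hw.1]) (by linarith [hw.2, hx.2]) (by linarith)
      (by linarith [hw.1])
  refine ((hsys.mono hsub).oscEnergy_le_exp_mul_of_abs_le ha (by nlinarith) hp
    (fun w hw => h.abs_jacobiPotential_le ⟨hw.1, hw.2.trans hx.2⟩) hx.1).trans ?_
  rw [turningConst, mul_assoc (Real.exp _)]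
  gcongr
  · exact oscEnergy_nonneg ha _ _
  · exact h.turning_exponent_le hx.2
  · exact h.oscEnergy_rightNode_le hsys

lemma pow_four_mul_le_of_mem_oscillatory (h : IsTurningRegime β δ k u t a)
    (hx : x ∈ Icc (-1 + δ) (rightNode k u t a)) {A : ℝ}
    (hA : oscEnergy (jacobiFreq u t x) (y x) (z x) ≤ A) :
    y x ^ 4 * (u ^ 2 * |x - t| + a ^ 2) ≤ 2 * A ^ 2 / δ := by
  have hu := h.param_pos
  have hδ := h.delta_pos
  have hxt : x < t := hx.2.trans_lt h.rightNode_lt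
  have hxI : x ∈ Ioo (-1) t := ⟨by linarith [hx.1], hxt⟩
  have hm := jacobiFreq_pos hu hxI
  have hy : (jacobiFreq u t x * y x ^ 2) ^ 2 ≤ A ^ 2 := by
    have := (mul_sq_le_oscEnergy hm (y x) (z x)).trans hA
    gcongr
  rw [mul_pow, jacobiFreq_sq (Ioo_subset_Icc_self hxI)] at hy
  have ha : a ^ 2 ≤ u ^ 2 * (t - x) := calc
    a ^ 2 ≤ (k * a) ^ 2 := by
      gcongr
      · linarith [h.one_le]
      · exact le_mul_of_one_le_left (by linarith [h.one_le]) (by linarith [h.two_le])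
    _ = u ^ 2 * (t - rightNode k u t a) := by
      rw [rightNode]
      field_simp
      ring
    _ ≤ u ^ 2 * (t - x) := by
      gcongr
      exact hx.2
  rw [abs_of_neg (by linarith), neg_sub, le_div_iff₀ hδ]
  have : 0 < t - x := by linarith
  calc y x ^ 4 * (u ^ 2 * (t - x) + a ^ 2) * δ
      ≤ y x ^ 4 * (u ^ 2 * (t - x) + u ^ 2 * (t - x)) * (1 + x) := by
        gcongr
        linarith [hx.1]
    _ = 2 * (u ^ 2 * (1 + x) * (t - x) * (y x ^ 2) ^ 2) := by ring
    _ ≤ 2 * A ^ 2 := by gcongr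

lemma pow_four_mul_le_of_mem_turning (h : IsTurningRegime β δ k u t a)
    (hx : x ∈ Icc (rightNode k u t a) t) {S : ℝ} (hS : oscEnergy a (y x) (z x) ≤ S) :
    y x ^ 4 * (u ^ 2 * |x - t| + a ^ 2) ≤ (k ^ 2 + 1) * S ^ 2 := by
  have hu := h.param_pos
  have ha := one_pos.trans_le h.one_le
  have hxt : u ^ 2 * |x - t| ≤ k ^ 2 * a ^ 2 := calc
    u ^ 2 * |x - t| ≤ u ^ 2 * (k * a / u) ^ 2 := by
      gcongr
      rw [abs_of_nonpos (sub_nonpos.2 hx.2)]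
      linarith [hx.1.trans_eq' (show t - (k * a / u) ^ 2 = _ from rfl)]
    _ = k ^ 2 * a ^ 2 := by field_simp
  calc y x ^ 4 * (u ^ 2 * |x - t| + a ^ 2) ≤ y x ^ 4 * (k ^ 2 * a ^ 2 + a ^ 2) := by gcongr
    _ = (k ^ 2 + 1) * (a * y x ^ 2) ^ 2 := by ring
    _ ≤ (k ^ 2 + 1) * S ^ 2 := by
        gcongr
        exact (mul_sq_le_oscEnergy ha _ _).trans hS

lemma deriv_jacobiPotential_nonpos (h : IsTurningRegime β δ k u t a) (hx : x ∈ Icc t 1) :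
    u ^ 2 * (t - 1 - 2 * x) + (x + β ^ 2) / 2 ≤ 0 := by
  have hslope : t - 1 - 2 * x ≤ -δ := by linarith [hx.1, h.delta_le]
  nlinarith [h.one_add_sq_le, h.two_mul_sq_le, hx.2,
    mul_le_mul_of_nonneg_left hslope (sq_nonneg u)]

lemma pow_four_mul_le_of_mem_decay (h : IsTurningRegime β δ k u t a)
    (hsys : IsSturmLiouvilleOn (fun x => 1 - x ^ 2) (jacobiPotential u t β) y z (Ioo (-1) 1))
    (hyc : Continuous y) (hzc : Continuous z) (hy₁ : y 1 = 0) {S : ℝ}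
    (hS : oscEnergy a (y t) (z t) ≤ S) (hx : x ∈ Icc t 1) :
    y x ^ 4 * (u ^ 2 * |x - t| + a ^ 2) ≤ (1 + 1 / δ) * S ^ 2 := by
  have hu := h.param_pos
  have ha := one_pos.trans_le h.one_le
  have hδ := h.delta_pos
  have ht := h.delta_le
  have hneg := mul_le_neg_jacobiPotential (u := u) (t := t) (β := β) (x := x)
    ⟨by linarith [hx.1], hx.2⟩
  have hWt : jacobiPotential u t β t ≤ 0 := by
    simpa using mul_le_neg_jacobiPotential (u := u) (t := t) (β := β) (x := t)
      ⟨by linarith, h.turningPoint_lt_one.le⟩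
  obtain ⟨hdecay, hpot⟩ := (hsys.mono (Ioo_subset_Ioo_left (by linarith))
    ).sq_le_and_neg_mul_pow_four_le (fun w hw => by nlinarith [hw.1, hw.2]) hyc.continuousOn
    hzc.continuousOn hy₁
    (fun w _ => (hasDerivAt_jacobiPotential u t β w).continuousAt.continuousWithinAt)
    (fun w _ => hasDerivAt_jacobiPotential u t β w)
    (fun w hw => h.deriv_jacobiPotential_nonpos (Ioo_subset_Icc_self hw)) hWt hx
  have hS₁ : (a * y x ^ 2) ^ 2 ≤ S ^ 2 := by
    have := (mul_sq_le_oscEnergy ha (y t) (z t)).trans hS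
    gcongr
    exact (mul_le_mul_of_nonneg_left hdecay ha.le).trans this
  have hS₂ : (y t * z t) ^ 2 ≤ S ^ 2 := by
    have := two_mul_abs_mul_le_oscEnergy ha (y t) (z t)
    refine sq_le_sq' ?_ ?_ <;> linarith [neg_abs_le (y t * z t), le_abs_self (y t * z t),
      abs_nonneg (y t * z t)]
  have hfar : y x ^ 4 * (u ^ 2 * (x - t)) ≤ S ^ 2 / δ := by
    rw [le_div_iff₀ hδ]
    have hxt : 0 ≤ x - t := by linarith [hx.1]
    calc y x ^ 4 * (u ^ 2 * (x - t)) * δ ≤ y x ^ 4 * (u ^ 2 * (x - t)) * (1 + x) := by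
          gcongr
          linarith [hx.1]
      _ = u ^ 2 * (1 + x) * (x - t) * y x ^ 4 := by ring
      _ ≤ -jacobiPotential u t β x * y x ^ 4 := by gcongr
      _ ≤ S ^ 2 := hpot.trans hS₂
  rw [abs_of_nonneg (by linarith [hx.1])]
  calc _ = y x ^ 4 * (u ^ 2 * (x - t)) + (a * y x ^ 2) ^ 2 := by ring
    _ ≤ S ^ 2 / δ + S ^ 2 := add_le_add hfar hS₁
    _ = _ := by ring

lemma exists_pow_four_mul_le (β δ k : ℝ) :
    ∃ C : ℝ, ∀ u t a : ℝ, IsTurningRegime β δ k u t a → ∀ y z : ℝ → ℝ,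
      IsSturmLiouvilleOn (fun x => 1 - x ^ 2) (jacobiPotential u t β) y z (Ioo (-1) 1) →
      Continuous y → Continuous z → y 1 = 0 → ∀ x ∈ Icc (-1 + δ) 1,
        y x ^ 4 * (u ^ 2 * |x - t| + a ^ 2) ≤
          C * oscEnergy 1 (y (leftNode k u)) (z (leftNode k u)) ^ 2 := by
  set A := oscillatoryConst β δ k
  set S := turningConst β δ k
  refine ⟨max (2 * A ^ 2 / δ) (max ((k ^ 2 + 1) * S ^ 2) ((1 + 1 / δ) * S ^ 2)),
    fun u t a h y z hsys hyc hzc hy₁ x hx => ?_⟩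
  set E := oscEnergy 1 (y (leftNode k u)) (z (leftNode k u))
  rcases le_total x (rightNode k u t a) with hosc | hright
  · calc _ ≤ 2 * (A * E) ^ 2 / δ :=
          h.pow_four_mul_le_of_mem_oscillatory ⟨hx.1, hosc⟩ <|
            h.oscEnergy_le_of_mem_oscillatory hsys
              ⟨by linarith [h.leftNode_le, h.delta_pos, hx.1], hosc⟩
      _ = 2 * A ^ 2 / δ * E ^ 2 := by ring
      _ ≤ _ := by
          gcongr
          exact le_max_left _ _
  rcases le_total x t with hturn | hdecay
  · calc _ ≤ (k ^ 2 + 1) * (S * E) ^ 2 :=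
          h.pow_four_mul_le_of_mem_turning ⟨hright, hturn⟩ <|
            h.oscEnergy_le_of_mem_turning hsys ⟨hright, hturn⟩
      _ = (k ^ 2 + 1) * S ^ 2 * E ^ 2 := by ring
      _ ≤ _ := by
          gcongr
          exact (le_max_left _ _).trans (le_max_right _ _)
  · calc _ ≤ (1 + 1 / δ) * (S * E) ^ 2 :=
          h.pow_four_mul_le_of_mem_decay hsys hyc hzc hy₁
            (h.oscEnergy_le_of_mem_turning hsys ⟨h.rightNode_lt.le, le_rfl⟩) ⟨hdecay, hx.2⟩
      _ = (1 + 1 / δ) * S ^ 2 * E ^ 2 := by ring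
      _ ≤ _ := by
          gcongr
          exact (le_max_right _ _).trans (le_max_right _ _)

end IsTurningRegime

end TurningRegime

section JacobiPolynomial

open Polynomial
open Finset.HasAntidiagonal (antidiagonal mem_antidiagonal)

/-- The products of powers of `(X - 1) / 2` and `(X + 1) / 2` in which Jacobi polynomials are
expanded. -/
noncomputable def jacobiBasis (s m : ℕ) : ℝ[X] :=
  (C (1 / 2) * (X - 1)) ^ s * (C (1 / 2) * (X + 1)) ^ m

/-- The coefficient of `jacobiBasis s m` in the Jacobi polynomial of degree `s + m`. -/
noncomputable def jacobiCoeff (α β : ℝ) (s m : ℕ) : ℝ :=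
  genChoose (s + m + α) m * genChoose (s + m + β) s

/-- The Jacobi polynomial as an element of `ℝ[X]`. -/
noncomputable def jacobiPoly (α β : ℝ) (n : ℕ) : ℝ[X] :=
  ∑ p ∈ antidiagonal n, jacobiCoeff α β p.1 p.2 • jacobiBasis p.1 p.2

/-- The second order differential operator with the Jacobi polynomials as eigenfunctions. -/
noncomputable def jacobiOperator (α β : ℝ) : ℝ[X] →ₗ[ℝ] ℝ[X] :=
  LinearMap.mulLeft ℝ (1 - X ^ 2) ∘ₗ derivative ∘ₗ derivative +
    LinearMap.mulLeft ℝ (C (β - α) - C (α + β + 2) * X) ∘ₗ derivative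

lemma eval_jacobiPoly (α β : ℝ) (n : ℕ) (x : ℝ) : (jacobiPoly α β n).eval x = jacobi α β n x := by
  rw [jacobiPoly, eval_finsetSum, jacobi, Finset.Nat.sum_antidiagonal_eq_sum_range_succ
    fun i j => (jacobiCoeff α β i j • jacobiBasis i j).eval x]
  refine Finset.sum_congr rfl fun s hs => ?_
  have hn : (s : ℝ) + (n - s : ℕ) = n := by
    exact_mod_cast Nat.add_sub_cancel' (Finset.mem_range_succ_iff.1 hs)
  simp only [jacobiCoeff, jacobiBasis, hn, eval_smul, eval_mul, eval_pow, eval_C, eval_sub,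
    eval_add, eval_X, eval_one, smul_eq_mul]
  ring

lemma genChoose_zero (t : ℝ) : genChoose t 0 = 1 := by simp [genChoose]

lemma genChoose_succ (t : ℝ) (j : ℕ) :
    (j + 1) * genChoose t (j + 1) = (t - j) * genChoose t j := by
  have : (j.factorial : ℝ) ≠ 0 := by positivity
  simp only [genChoose, Finset.prod_range_succ, Nat.factorial_succ]
  push_cast
  field_simp

lemma jacobiCoeff_succ_left (α β : ℝ) (s m : ℕ) :
    (s + 1) * (s + 1 + α) * jacobiCoeff α β (s + 1) m =
      (m + 1) * (m + 1 + β) * jacobiCoeff α β s (m + 1) := by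
  have h₁ := genChoose_succ (s + 1 + m + α) m
  have h₂ := genChoose_succ (s + 1 + m + β) s
  simp only [jacobiCoeff, Nat.cast_add_one, show (s : ℝ) + (m + 1) = s + 1 + m by ring]
  linear_combination (s + 1 + α) * genChoose (s + 1 + m + α) m * h₂ -
    (m + 1 + β) * genChoose (s + 1 + m + β) s * h₁

lemma derivative_jacobiBasis (s m : ℕ) :
    derivative (jacobiBasis s m) =
      C (1 / 2) * ((s : ℝ[X]) * jacobiBasis (s - 1) m + (m : ℝ[X]) * jacobiBasis s (m - 1)) := by
  simp only [jacobiBasis, derivative_mul, derivative_pow, derivative_C, derivative_sub,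
    derivative_add, derivative_X, derivative_one, C_eq_natCast]
  ring

lemma jacobiOperator_jacobiBasis (α β : ℝ) (s m : ℕ) :
    jacobiOperator α β (jacobiBasis s m) =
      -(((s + m) * (s + m + α + β + 1) : ℝ) • jacobiBasis s m) +
        ((m * (m + β) : ℝ) • jacobiBasis s (m - 1) -
          (s * (s + α) : ℝ) • jacobiBasis (s - 1) m) := by
  refine Polynomial.funext fun x => ?_
  simp only [jacobiOperator, LinearMap.add_apply, LinearMap.comp_apply, LinearMap.mulLeft_apply,
    derivative_jacobiBasis, derivative_C_mul, derivative_add, derivative_natCast_mul]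
  simp only [jacobiBasis, eval_mul, eval_add, eval_sub, eval_neg, eval_smul, eval_pow, eval_C,
    eval_X, eval_one, eval_natCast, smul_eq_mul]
  obtain ⟨y, rfl⟩ : ∃ y, x = 2 * y + 1 := ⟨(x - 1) / 2, by ring⟩
  rw [show 1 / 2 * (2 * y + 1 - 1) = y by ring, show 1 / 2 * (2 * y + 1 + 1) = y + 1 by ring]
  rcases s with _ | _ | s <;> rcases m with _ | _ | m <;>
    simp only [Nat.add_sub_cancel, Nat.zero_sub, zero_add, Nat.sub_self,
      show ∀ k : ℕ, k + 1 + 1 - 1 = k + 1 from fun _ => rfl] <;>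
    push_cast <;> ring

lemma jacobiOperator_jacobiPoly (α β : ℝ) (n : ℕ) :
    jacobiOperator α β (jacobiPoly α β n) = -((n * (n + α + β + 1) : ℝ) • jacobiPoly α β n) := by
  rcases n with _ | n
  · simp [jacobiPoly, jacobiOperator_jacobiBasis]
  have hterm : ∀ p ∈ antidiagonal (n + 1),
      jacobiOperator α β (jacobiCoeff α β p.1 p.2 • jacobiBasis p.1 p.2) =
        -(((n + 1 : ℕ) * ((n + 1 : ℕ) + α + β + 1) : ℝ) •
            jacobiCoeff α β p.1 p.2 • jacobiBasis p.1 p.2) +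
          ((p.2 * (p.2 + β) * jacobiCoeff α β p.1 p.2) • jacobiBasis p.1 (p.2 - 1) -
            (p.1 * (p.1 + α) * jacobiCoeff α β p.1 p.2) • jacobiBasis (p.1 - 1) p.2) := by
    intro p hp
    rw [map_smul, jacobiOperator_jacobiBasis, ← mem_antidiagonal.1 hp]
    push_cast
    module
  have htelescope : ∑ p ∈ antidiagonal (n + 1),
        (p.2 * (p.2 + β) * jacobiCoeff α β p.1 p.2) • jacobiBasis p.1 (p.2 - 1) =
      ∑ p ∈ antidiagonal (n + 1),
        (p.1 * (p.1 + α) * jacobiCoeff α β p.1 p.2) • jacobiBasis (p.1 - 1) p.2 := by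
    rw [Finset.Nat.sum_antidiagonal_succ', Finset.Nat.sum_antidiagonal_succ]
    simp [jacobiCoeff_succ_left]
  rw [jacobiPoly, map_sum, Finset.sum_congr rfl hterm, Finset.sum_add_distrib,
    Finset.sum_sub_distrib, htelescope, sub_self, add_zero, Finset.sum_neg_distrib, Finset.smul_sum]

/-- The derivative of the Jacobi polynomial. -/
noncomputable def jacobiDeriv (α β : ℝ) (n : ℕ) (x : ℝ) : ℝ :=
  (derivative (jacobiPoly α β n)).eval x

lemma hasDerivAt_jacobi (α β : ℝ) (n : ℕ) (x : ℝ) :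
    HasDerivAt (jacobi α β n) (jacobiDeriv α β n x) x :=
  ((jacobiPoly α β n).hasDerivAt x).congr_of_eventuallyEq
    (.of_forall fun y => (eval_jacobiPoly α β n y).symm)

lemma hasDerivAt_jacobiDeriv (α β : ℝ) (n : ℕ) (x : ℝ) :
    HasDerivAt (jacobiDeriv α β n) (deriv (jacobiDeriv α β n) x) x :=
  (derivative (jacobiPoly α β n)).differentiable.differentiableAt.hasDerivAt

lemma jacobi_differential_equation (α β : ℝ) (n : ℕ) (x : ℝ) :
    (1 - x ^ 2) * deriv (jacobiDeriv α β n) x +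
      (β - α - (α + β + 2) * x) * jacobiDeriv α β n x +
      n * (n + α + β + 1) * jacobi α β n x = 0 := by
  have hode := congrArg (eval x) (jacobiOperator_jacobiPoly α β n)
  have hderiv : deriv (jacobiDeriv α β n) x =
      (derivative (derivative (jacobiPoly α β n))).eval x :=
    (derivative (jacobiPoly α β n)).deriv
  simp only [jacobiOperator, LinearMap.add_apply, LinearMap.comp_apply, LinearMap.mulLeft_apply,
    eval_mul, eval_add, eval_sub, eval_neg, eval_smul, eval_pow, eval_C, eval_X, eval_one,
    smul_eq_mul, eval_jacobiPoly] at hode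
  rw [hderiv, jacobiDeriv]
  linear_combination hode

lemma continuous_jacobi (α β : ℝ) (n : ℕ) : Continuous (jacobi α β n) :=
  (jacobiPoly α β n).continuous.congr (eval_jacobiPoly α β n)

lemma continuous_jacobiDeriv (α β : ℝ) (n : ℕ) : Continuous (jacobiDeriv α β n) :=
  (derivative (jacobiPoly α β n)).continuous

end JacobiPolynomial

section JacobiFunction

/-- The parameter `u = n + (α + β + 1) / 2`. -/
noncomputable def jacobiParam (α β : ℝ) (n : ℕ) : ℝ := n + (α + β + 1) / 2

/-- The turning point `x_tr = 1 - α² / (2 u²)`. -/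
noncomputable def jacobiTurningPoint (α β : ℝ) (n : ℕ) : ℝ :=
  1 - α ^ 2 / (2 * jacobiParam α β n ^ 2)

/-- The square root of the Jacobi weight, normalized by powers of `2`. -/
noncomputable def jacobiHalfWeight (α β x : ℝ) : ℝ :=
  ((1 - x) / 2) ^ (α / 2) * ((1 + x) / 2) ^ (β / 2)

/-- The logarithmic derivative of `jacobiHalfWeight`, multiplied by `1 - x ^ 2`. -/
noncomputable def jacobiSlope (α β x : ℝ) : ℝ := (β * (1 - x) - α * (1 + x)) / 2

/-- The Jacobi function: the Jacobi polynomial times the square root of its weight. -/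
noncomputable def jacobiFun (α β : ℝ) (n : ℕ) (x : ℝ) : ℝ :=
  jacobiHalfWeight α β x * jacobi α β n x

/-- The Jacobi function differentiated along `(1 - x ^ 2) d/dx`, written so that it makes sense at
`x = ±1`. -/
noncomputable def jacobiFlux (α β : ℝ) (n : ℕ) (x : ℝ) : ℝ :=
  jacobiHalfWeight α β x *
    (jacobiSlope α β x * jacobi α β n x + (1 - x ^ 2) * jacobiDeriv α β n x)

variable {α β x : ℝ} {n : ℕ}

lemma jacobiParam_pos (hα : 0 ≤ α) (hβ : 0 ≤ β) : 0 < jacobiParam α β n := by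
  rw [jacobiParam]
  positivity

lemma hasDerivAt_jacobiHalfWeight (hx : x ∈ Ioo (-1) 1) :
    HasDerivAt (jacobiHalfWeight α β)
      (jacobiHalfWeight α β x * jacobiSlope α β x / (1 - x ^ 2)) x := by
  have h₁ : 0 < 1 - x := by linarith [hx.2]
  have h₂ : 0 < 1 + x := by linarith [hx.1]
  refine (((((hasDerivAt_id x).const_sub 1).div_const 2).rpow_const (p := α / 2)
    (.inl (by positivity))).mul ((((hasDerivAt_id x).const_add 1).div_const 2).rpow_const
    (p := β / 2) (.inl (by positivity)))).congr_deriv ?_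
  simp only [id, jacobiHalfWeight, jacobiSlope]
  rw [Real.rpow_sub_one (by positivity), Real.rpow_sub_one (by positivity),
    show 1 - x ^ 2 = (1 - x) * (1 + x) by ring]
  field_simp
  ring

lemma jacobiPotential_eq (h : jacobiParam α β n ≠ 0) (x : ℝ) :
    jacobiPotential (jacobiParam α β n) (jacobiTurningPoint α β n) β x =
      (1 - x ^ 2) * (n * (n + α + β + 1) + (α + β) / 2) - jacobiSlope α β x ^ 2 := by
  have hturn : jacobiParam α β n ^ 2 * (1 + x) * (jacobiTurningPoint α β n - x) =
      jacobiParam α β n ^ 2 * (1 - x ^ 2) - α ^ 2 * (1 + x) / 2 := by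
    rw [jacobiTurningPoint]
    field_simp
    ring
  rw [jacobiPotential, hturn, jacobiParam, jacobiSlope]
  ring

lemma isSturmLiouvilleOn_jacobiFun (h : jacobiParam α β n ≠ 0) :
    IsSturmLiouvilleOn (fun x => 1 - x ^ 2)
      (jacobiPotential (jacobiParam α β n) (jacobiTurningPoint α β n) β)
      (jacobiFun α β n) (jacobiFlux α β n) (Ioo (-1) 1) := by
  have hp : ∀ x ∈ Ioo (-1 : ℝ) 1, 1 - x ^ 2 ≠ 0 := fun x hx => by nlinarith [hx.1, hx.2]
  refine ⟨fun x hx => ?_, fun x hx => ?_⟩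
  · refine ((hasDerivAt_jacobiHalfWeight hx).mul (hasDerivAt_jacobi α β n x)).congr_deriv ?_
    rw [jacobiFlux]
    field_simp [hp x hx]
  · have hslope : HasDerivAt (jacobiSlope α β) ((β * -1 - α * 1) / 2) x :=
      ((((hasDerivAt_id x).const_sub 1).const_mul β).sub
        (((hasDerivAt_id x).const_add 1).const_mul α)).div_const 2
    refine ((hasDerivAt_jacobiHalfWeight hx).mul ((hslope.mul (hasDerivAt_jacobi α β n x)).add
      ((((hasDerivAt_id x).fun_pow 2).const_sub 1).mul
        (hasDerivAt_jacobiDeriv α β n x)))).congr_deriv ?_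
    have hode := jacobi_differential_equation α β n x
    rw [jacobiPotential_eq h, jacobiFun, eq_div_iff (hp x hx)]
    simp only [Pi.add_apply, Pi.mul_apply, id, jacobiSlope]
    have := hp x hx
    field_simp
    push_cast
    linear_combination 4 * (1 - x ^ 2) * jacobiHalfWeight α β x * hode

lemma continuous_jacobiHalfWeight (hα : 0 ≤ α) (hβ : 0 ≤ β) :
    Continuous (jacobiHalfWeight α β) :=
  .mul (.rpow_const (by fun_prop) fun _ => .inr (by positivity))
    (.rpow_const (by fun_prop) fun _ => .inr (by positivity))

lemma continuous_jacobiFun (hα : 0 ≤ α) (hβ : 0 ≤ β) : Continuous (jacobiFun α β n) :=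
  (continuous_jacobiHalfWeight hα hβ).mul (continuous_jacobi α β n)

lemma continuous_jacobiFlux (hα : 0 ≤ α) (hβ : 0 ≤ β) : Continuous (jacobiFlux α β n) := by
  have := continuous_jacobi α β n
  have := continuous_jacobiDeriv α β n
  unfold jacobiFlux jacobiSlope
  exact (continuous_jacobiHalfWeight hα hβ).mul (by fun_prop)

lemma jacobiFun_one (hα : 0 < α) : jacobiFun α β n 1 = 0 := by
  simp [jacobiFun, jacobiHalfWeight, Real.zero_rpow, hα.ne']

end JacobiFunction

section InitialData

variable {α β x : ℝ} {n : ℕ}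

lemma jacobi_neg_one (α β : ℝ) (n : ℕ) : jacobi α β n (-1) = (-1) ^ n * genChoose (n + β) n := by
  rw [jacobi, Finset.sum_eq_single_of_mem n (Finset.self_mem_range_succ n)]
  · norm_num [genChoose_zero, mul_comm]
  · intro s hs hsn
    have : n - s ≠ 0 := Nat.sub_ne_zero_of_lt ((Finset.mem_range_succ_iff.1 hs).lt_of_ne hsn)
    simp [this]

lemma genChoose_add_self_succ (β : ℝ) (n : ℕ) :
    genChoose ((n + 1 : ℕ) + β) (n + 1) = (1 + β / (n + 1)) * genChoose (n + β) n := by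
  have : (n.factorial : ℝ) ≠ 0 := by positivity
  simp only [genChoose, Finset.prod_range_succ', Nat.factorial_succ]
  push_cast
  simp only [show ∀ i : ℕ, (n : ℝ) + 1 + β - (i + 1) = n + β - i from fun i => by ring]
  field_simp
  ring

lemma genChoose_add_self_nonneg (hβ : 0 ≤ β) (n : ℕ) : 0 ≤ genChoose (n + β) n := by
  induction n with
  | zero => simp [genChoose_zero]
  | succ n ih =>
    rw [genChoose_add_self_succ]
    positivity

lemma genChoose_add_self_le_exp (hβ : 0 ≤ β) (n : ℕ) :
    genChoose (n + β) n ≤ Real.exp (β * harmonic n) := by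
  induction n with
  | zero => simp [genChoose_zero]
  | succ n ih =>
    have hfactor : 1 + β / (n + 1) ≤ Real.exp (β / (n + 1)) := by
      linarith [Real.add_one_le_exp (β / (n + 1))]
    calc genChoose ((n + 1 : ℕ) + β) (n + 1)
        = (1 + β / (n + 1)) * genChoose (n + β) n := genChoose_add_self_succ β n
      _ ≤ Real.exp (β / (n + 1)) * Real.exp (β * harmonic n) :=
          mul_le_mul hfactor ih (genChoose_add_self_nonneg hβ n) (Real.exp_pos _).le
      _ = Real.exp (β * harmonic (n + 1)) := by
          rw [← Real.exp_add, harmonic_succ]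
          push_cast
          ring_nf

lemma genChoose_add_self_le_rpow (hβ : 0 ≤ β) (hn : n ≠ 0) :
    genChoose (n + β) n ≤ (Real.exp 1 * n) ^ β := by
  have hn₀ : (0 : ℝ) < n := by positivity
  calc genChoose (n + β) n ≤ Real.exp (β * harmonic n) := genChoose_add_self_le_exp hβ n
    _ ≤ Real.exp (β * (1 + Real.log n)) := by
        gcongr
        exact harmonic_le_one_add_log n
    _ = (Real.exp 1 * n) ^ β := by
        rw [Real.rpow_def_of_pos (by positivity), Real.log_mul (by positivity) hn₀.ne',
          Real.log_exp, mul_comm]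

lemma sq_jacobiHalfWeight_mul_sq_jacobi_neg_one_le (hα : 0 ≤ α) (hβ : 0 ≤ β) (hn : n ≠ 0)
    (hx : x ∈ Icc (-1) 1) :
    jacobiHalfWeight α β x ^ 2 * jacobi α β n (-1) ^ 2 ≤
      ((1 + x) / 2 * (Real.exp 1 * n) ^ 2) ^ β := by
  have h₁ : 0 ≤ (1 - x) / 2 := by linarith [hx.2]
  have h₂ : 0 ≤ (1 + x) / 2 := by linarith [hx.1]
  have hsq : ∀ {b : ℝ}, 0 ≤ b → ∀ e : ℝ, (b ^ (e / 2)) ^ 2 = b ^ e := fun hb e => by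
    rw [← Real.rpow_mul_natCast hb]
    norm_num
  have hweight : jacobiHalfWeight α β x ^ 2 ≤ ((1 + x) / 2) ^ β := by
    rw [jacobiHalfWeight, mul_pow, hsq h₁, hsq h₂]
    exact mul_le_of_le_one_left (by positivity)
      (Real.rpow_le_one h₁ (by linarith [hx.1]) hα)
  have hend : jacobi α β n (-1) ^ 2 ≤ ((Real.exp 1 * n) ^ 2) ^ β := by
    rw [jacobi_neg_one, mul_pow, ← pow_mul, mul_comm n 2, pow_mul, neg_one_sq, one_pow, one_mul,
      ← Real.rpow_pow_comm (by positivity)]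
    have := genChoose_add_self_nonneg hβ n
    gcongr
    exact genChoose_add_self_le_rpow hβ hn
  rw [Real.mul_rpow h₂ (by positivity)]
  gcongr

-- The derivative of the left side is `2 * P' ^ 2 * (α - β + (α + β + 1) * x)`.
lemma sonin_jacobi_le (hαβ : 0 ≤ α + β + 1) (hx : -1 ≤ x)
    (hx' : (α + β + 1) * (1 + x) ≤ 2 * β + 1) :
    n * (n + α + β + 1) * jacobi α β n x ^ 2 + (1 - x ^ 2) * jacobiDeriv α β n x ^ 2 ≤
      n * (n + α + β + 1) * jacobi α β n (-1) ^ 2 := by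
  have hd : ∀ w, HasDerivAt (fun w => n * (n + α + β + 1) * jacobi α β n w ^ 2 +
      (1 - w ^ 2) * jacobiDeriv α β n w ^ 2)
      (2 * jacobiDeriv α β n w ^ 2 * (α - β + (α + β + 1) * w)) w := fun w => by
    refine ((((hasDerivAt_jacobi α β n w).fun_pow 2).const_mul (n * (n + α + β + 1))).fun_add
      ((((hasDerivAt_id w).fun_pow 2).const_sub 1).fun_mul
        ((hasDerivAt_jacobiDeriv α β n w).fun_pow 2))).congr_deriv ?_
    simp only [id]
    push_cast
    linear_combination 2 * jacobiDeriv α β n w * jacobi_differential_equation α β n w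
  have hanti := antitoneOn_Icc_of_hasDerivAt_nonpos (a := -1) (b := x)
    (fun w _ => (hd w).continuousAt.continuousWithinAt) (fun w _ => hd w) fun w hw =>
      mul_nonpos_of_nonneg_of_nonpos (by positivity)
        (by linarith [mul_le_mul_of_nonneg_left hw.2.le hαβ])
  simpa using hanti (left_mem_Icc.2 hx) (right_mem_Icc.2 hx) hx

lemma sq_jacobiSlope_le (hα : 0 ≤ α) (hβ : 0 ≤ β) (hx : -1 ≤ x)
    (hx' : (α + β + 1) * (1 + x) ≤ 2 * β + 1) : jacobiSlope α β x ^ 2 ≤ (β + 1) ^ 2 := by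
  have h₁ : 0 ≤ 1 + x := by linarith
  have hαx := mul_nonneg hα h₁
  have hβx := mul_nonneg hβ h₁
  refine sq_le_sq' ?_ ?_ <;> rw [jacobiSlope] <;> linarith

lemma sq_slope_mul_jacobi_add_le (hα : 0 ≤ α) (hβ : 0 ≤ β) (hn : n ≠ 0)
    (hx : x ∈ Icc (-1) 1) (hx' : (α + β + 1) * (1 + x) ≤ 2 * β + 1) :
    jacobi α β n x ^ 2 +
        (jacobiSlope α β x * jacobi α β n x + (1 - x ^ 2) * jacobiDeriv α β n x) ^ 2 ≤
      (1 + 2 * (β + 1) ^ 2 + 4 * (jacobiParam α β n ^ 2 * (1 + x))) * jacobi α β n (-1) ^ 2 := by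
  set P := jacobi α β n x
  set D := jacobiDeriv α β n x
  set c := jacobi α β n (-1)
  set L : ℝ := n * (n + α + β + 1)
  have hL : 0 < L := by positivity
  have hLu : L ≤ jacobiParam α β n ^ 2 := by
    rw [jacobiParam]
    nlinarith [sq_nonneg (α + β + 1)]
  have h₁ : 0 ≤ 1 + x := by linarith [hx.1]
  have hp : 0 ≤ 1 - x ^ 2 := by nlinarith [hx.2]
  have hsonin : L * P ^ 2 + (1 - x ^ 2) * D ^ 2 ≤ L * c ^ 2 :=
    sonin_jacobi_le (by positivity) hx.1 hx'
  have hP : P ^ 2 ≤ c ^ 2 :=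
    le_of_mul_le_mul_left (by linarith [mul_nonneg hp (sq_nonneg D)]) hL
  have hD : ((1 - x ^ 2) * D) ^ 2 ≤ 2 * (1 + x) * (jacobiParam α β n ^ 2 * c ^ 2) := by
    calc ((1 - x ^ 2) * D) ^ 2 = (1 - x ^ 2) * ((1 - x ^ 2) * D ^ 2) := by ring
      _ ≤ 2 * (1 + x) * (L * c ^ 2) :=
          mul_le_mul (by nlinarith) (by linarith [mul_nonneg hL.le (sq_nonneg P)])
            (by positivity) (by positivity)
      _ ≤ _ := by gcongr
  have hslope := sq_jacobiSlope_le hα hβ hx.1 hx'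
  calc P ^ 2 + (jacobiSlope α β x * P + (1 - x ^ 2) * D) ^ 2
      ≤ P ^ 2 + 2 * ((jacobiSlope α β x * P) ^ 2 + ((1 - x ^ 2) * D) ^ 2) := by
        gcongr
        exact add_sq_le
    _ ≤ c ^ 2 + 2 * ((β + 1) ^ 2 * c ^ 2 +
          2 * (1 + x) * (jacobiParam α β n ^ 2 * c ^ 2)) := by
        rw [mul_pow]
        gcongr
    _ = _ := by ring

lemma oscEnergy_jacobiFun_le (hα : 0 ≤ α) (hβ : 0 ≤ β) (hn : n ≠ 0)
    (hx : x ∈ Icc (-1) 1) (hx' : (α + β + 1) * (1 + x) ≤ 2 * β + 1) :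
    oscEnergy 1 (jacobiFun α β n x) (jacobiFlux α β n x) ≤
      (1 + 2 * (β + 1) ^ 2 + 4 * (jacobiParam α β n ^ 2 * (1 + x))) *
        (Real.exp 2 / 2 * (jacobiParam α β n ^ 2 * (1 + x))) ^ β := by
  have h₁ : 0 ≤ 1 + x := by linarith [hx.1]
  have hnu : (n : ℝ) ≤ jacobiParam α β n := by
    rw [jacobiParam]
    linarith
  calc oscEnergy 1 (jacobiFun α β n x) (jacobiFlux α β n x)
      = jacobiHalfWeight α β x ^ 2 * (jacobi α β n x ^ 2 +
          (jacobiSlope α β x * jacobi α β n x + (1 - x ^ 2) * jacobiDeriv α β n x) ^ 2) := by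
        rw [oscEnergy, jacobiFun, jacobiFlux]
        ring
    _ ≤ jacobiHalfWeight α β x ^ 2 * ((1 + 2 * (β + 1) ^ 2 +
          4 * (jacobiParam α β n ^ 2 * (1 + x))) * jacobi α β n (-1) ^ 2) := by
        gcongr
        exact sq_slope_mul_jacobi_add_le hα hβ hn hx hx'
    _ = (1 + 2 * (β + 1) ^ 2 + 4 * (jacobiParam α β n ^ 2 * (1 + x))) *
          (jacobiHalfWeight α β x ^ 2 * jacobi α β n (-1) ^ 2) := by ring
    _ ≤ (1 + 2 * (β + 1) ^ 2 + 4 * (jacobiParam α β n ^ 2 * (1 + x))) *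
          ((1 + x) / 2 * (Real.exp 1 * jacobiParam α β n) ^ 2) ^ β := by
        gcongr
        refine (sq_jacobiHalfWeight_mul_sq_jacobi_neg_one_le hα hβ hn hx).trans ?_
        gcongr
    _ = _ := by
        rw [show Real.exp 2 = Real.exp 1 ^ 2 by rw [← Real.exp_nat_mul]; norm_num]
        ring_nf

end InitialData

section UniformBound

/-- The quantity `u² |x - x_tr| + α ^ (4 / 3)`. -/
noncomputable def jacobiScale (α β : ℝ) (n : ℕ) (x : ℝ) : ℝ :=
  jacobiParam α β n ^ 2 * |x - jacobiTurningPoint α β n| + α ^ ((4 : ℝ) / 3)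

variable {α β δ ε k c : ℝ} {n : ℕ}

lemma exists_forall_le_one_add_jacobiTurningPoint (hβ : 0 ≤ β) (hc : 0 < c) :
    ∃ δ > 0, ∀ (α : ℝ) (n : ℕ), 0 ≤ α → α ≤ c * (1 + n) →
      δ ≤ 1 + jacobiTurningPoint α β n := by
  set q := 2 * c / (1 + c)
  have hq : q < 2 := by
    rw [div_lt_iff₀ (by positivity)]
    linarith
  have hq₀ : 0 ≤ q := by positivity
  refine ⟨2 - q ^ 2 / 2, by nlinarith, fun α n hα hαc => ?_⟩
  have hu := jacobiParam_pos (n := n) hα hβ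
  have hαu : α ≤ q * jacobiParam α β n := by
    rw [div_mul_eq_mul_div, le_div_iff₀ (by positivity), jacobiParam]
    nlinarith [mul_nonneg hc.le hβ, mul_nonneg hc.le n.cast_nonneg]
  have : α ^ 2 / (2 * jacobiParam α β n ^ 2) ≤ q ^ 2 / 2 := by
    rw [div_le_iff₀ (by positivity)]
    calc α ^ 2 ≤ (q * jacobiParam α β n) ^ 2 := by gcongr
      _ = _ := by ring
  rw [jacobiTurningPoint]
  linarith

lemma isTurningRegime_jacobi (hα : 1 ≤ α) (hβ : 0 ≤ β) (hδ : 0 < δ) (hk : 2 ≤ k)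
    (hkβ : 1 + β ^ 2 ≤ k ^ 2) (hkδ : 8 ≤ k ^ 2 * δ)
    (hδt : δ ≤ 1 + jacobiTurningPoint α β n)
    (hlarge : 128 * k ^ 6 ≤ δ ^ 3 * jacobiParam α β n ^ 2) :
    IsTurningRegime β δ k (jacobiParam α β n) (jacobiTurningPoint α β n)
      (α ^ ((2 : ℝ) / 3)) := by
  have hα₀ : 0 ≤ α := by linarith
  have hu := jacobiParam_pos (n := n) hα₀ hβ
  have hcube : (α ^ ((2 : ℝ) / 3)) ^ 3 = α ^ 2 := by
    rw [← Real.rpow_mul_natCast hα₀]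
    norm_num
  refine ⟨hδ, hk, hkβ, hkδ, hu, Real.one_le_rpow hα (by norm_num), ?_, hδt, ?_⟩
  · rw [hcube, jacobiTurningPoint]
    field_simp
    ring
  · set u := jacobiParam α β n
    have hαu : α ^ 2 ≤ 4 * u ^ 2 := by
      have : α ^ 2 / (2 * u ^ 2) ≤ 2 := by
        rw [jacobiTurningPoint] at hδt
        linarith
      rw [div_le_iff₀ (by positivity)] at this
      linarith
    refine (pow_le_pow_iff_left₀ (by positivity) (by positivity) three_ne_zero).1 ?_
    calc ((k * α ^ ((2 : ℝ) / 3) / u) ^ 2) ^ 3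
        = k ^ 6 * ((α ^ ((2 : ℝ) / 3)) ^ 3) ^ 2 / u ^ 6 := by ring
      _ ≤ k ^ 6 * (4 * u ^ 2) ^ 2 / u ^ 6 := by
          rw [hcube]
          gcongr
      _ = 128 * k ^ 6 / u ^ 2 / 8 := by
          field_simp
          norm_num
      _ ≤ δ ^ 3 / 8 := by
          gcongr
          exact (div_le_iff₀ (by positivity)).2 hlarge
      _ = (δ / 2) ^ 3 := by ring

lemma IsTurningRegime.oscEnergy_jacobiFun_leftNode_le
    (h : IsTurningRegime β δ k (jacobiParam α β n) (jacobiTurningPoint α β n)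
      (α ^ ((2 : ℝ) / 3)))
    (hα : 1 ≤ α) (hβ : 0 ≤ β) (hδ : δ ≤ 1) (hn : n ≠ 0) :
    oscEnergy 1 (jacobiFun α β n (leftNode k (jacobiParam α β n)))
        (jacobiFlux α β n (leftNode k (jacobiParam α β n))) ≤
      (1 + 2 * (β + 1) ^ 2 + 4 * k ^ 2) * (Real.exp 2 / 2 * k ^ 2) ^ β := by
  have hα₀ : 0 ≤ α := by linarith
  set u := jacobiParam α β n
  have hu : 0 < u := jacobiParam_pos hα₀ hβ
  have hnode : 1 + leftNode k u = (k / u) ^ 2 := by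
    rw [leftNode]
    ring
  have hα_le : α ≤ (α ^ ((2 : ℝ) / 3)) ^ 2 := by
    rw [← Real.rpow_mul_natCast hα₀]
    exact Real.self_le_rpow_of_one_le hα (by norm_num)
  have hαnode : α * (k / u) ^ 2 ≤ 1 / 2 := by
    calc α * (k / u) ^ 2 ≤ (α ^ ((2 : ℝ) / 3)) ^ 2 * (k / u) ^ 2 := by gcongr
      _ = (k * α ^ ((2 : ℝ) / 3) / u) ^ 2 := by ring
      _ ≤ 1 / 2 := h.width_le.trans (by linarith)
  have hnode_le : (k / u) ^ 2 ≤ 1 / 2 :=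
    (le_mul_of_one_le_left (sq_nonneg _) hα).trans hαnode
  have hbound := oscEnergy_jacobiFun_le (x := leftNode k u) hα₀ hβ hn
    ⟨by linarith [sq_nonneg (k / u)], by linarith⟩ (by
      rw [hnode]
      nlinarith [mul_le_mul_of_nonneg_left hnode_le hβ])
  rwa [hnode, show u ^ 2 * (k / u) ^ 2 = k ^ 2 by field_simp] at hbound

lemma exists_jacobiFun_pow_four_mul_jacobiScale_le (hβ : 0 ≤ β) (hδ : δ ≤ 1) (k : ℝ) :
    ∃ C : ℝ, ∀ (α : ℝ) (n : ℕ), 1 ≤ α → n ≠ 0 →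
      IsTurningRegime β δ k (jacobiParam α β n) (jacobiTurningPoint α β n) (α ^ ((2 : ℝ) / 3)) →
      ∀ x ∈ Icc (-1 + δ) 1, jacobiFun α β n x ^ 4 * jacobiScale α β n x ≤ C := by
  obtain ⟨C, hC⟩ := IsTurningRegime.exists_pow_four_mul_le β δ k
  set M := (1 + 2 * (β + 1) ^ 2 + 4 * k ^ 2) * (Real.exp 2 / 2 * k ^ 2) ^ β
  refine ⟨|C| * M ^ 2, fun α n hα hn hregime x hx => ?_⟩
  have hα₀ : 0 < α := by linarith
  have hscale : (α ^ ((2 : ℝ) / 3)) ^ 2 = α ^ ((4 : ℝ) / 3) := by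
    rw [← Real.rpow_mul_natCast hα₀.le]
    norm_num
  have hfun := hC _ _ _ hregime _ _
    (isSturmLiouvilleOn_jacobiFun (jacobiParam_pos hα₀.le hβ).ne')
    (continuous_jacobiFun hα₀.le hβ) (continuous_jacobiFlux hα₀.le hβ) (jacobiFun_one hα₀) x hx
  rw [hscale] at hfun
  refine hfun.trans ?_
  gcongr
  · exact le_abs_self C
  · exact oscEnergy_nonneg one_pos _ _
  · exact hregime.oscEnergy_jacobiFun_leftNode_le hα hβ hδ hn

lemma exists_jacobiFun_pow_four_mul_jacobiScale_le_of_large_degree (hβ : 0 ≤ β)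
    (hε : 0 < ε) (hc : 0 < c) :
    ∃ (N : ℕ) (C : ℝ), ∀ n ≥ N, ∀ α, 1 ≤ α → α ≤ c * (1 + n) → ∀ x ∈ Icc (-1 + ε) 1,
      jacobiFun α β n x ^ 4 * jacobiScale α β n x ≤ C := by
  obtain ⟨δ₀, hδ₀, hδ₀t⟩ := exists_forall_le_one_add_jacobiTurningPoint hβ hc
  set δ := min (min ε 1) δ₀
  have hδ : 0 < δ := by positivity
  have hδε : δ ≤ ε := (min_le_left _ _).trans (min_le_left _ _)
  have hδ₁ : δ ≤ 1 := (min_le_left _ _).trans (min_le_right _ _)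
  obtain ⟨k, hk⟩ : ∃ k, k = 2 + β + 8 / δ := ⟨_, rfl⟩
  have hδ' : 0 < 8 / δ := by positivity
  have hk₂ : 2 ≤ k := by linarith
  have hkδ : 8 ≤ k ^ 2 * δ := by
    calc 8 = 8 / δ * δ := by field_simp
      _ ≤ k ^ 2 * δ := by
        gcongr
        nlinarith
  obtain ⟨C, hC⟩ := exists_jacobiFun_pow_four_mul_jacobiScale_le hβ hδ₁ k
  obtain ⟨N, hN⟩ := exists_nat_ge (128 * k ^ 6 / δ ^ 3)
  refine ⟨max N 1, C, fun n hn α hα hαc x hx => ?_⟩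
  have hn₁ : 1 ≤ n := (le_max_right _ _).trans hn
  have hu : (n : ℝ) ≤ jacobiParam α β n := by
    rw [jacobiParam]
    linarith
  have hlarge : 128 * k ^ 6 ≤ δ ^ 3 * jacobiParam α β n ^ 2 := by
    have hNn : (N : ℝ) ≤ n := by exact_mod_cast (le_max_left _ _).trans hn
    have : (1 : ℝ) ≤ n := by exact_mod_cast hn₁
    rw [← div_le_iff₀' (by positivity)]
    nlinarith
  exact hC α n hα (Nat.one_le_iff_ne_zero.1 hn₁)
    (isTurningRegime_jacobi hα hβ hδ hk₂ (by nlinarith) hkδ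
      ((min_le_right _ _).trans (hδ₀t α n (by linarith) hαc)) hlarge)
    x ⟨by linarith [hx.1], hx.2⟩

lemma continuous_uncurry_jacobi (β : ℝ) (n : ℕ) :
    Continuous fun p : ℝ × ℝ => jacobi p.1 β n p.2 := by
  unfold jacobi genChoose
  fun_prop

lemma continuousOn_uncurry_jacobiScale (hβ : 0 ≤ β) (n : ℕ) :
    ContinuousOn (fun p : ℝ × ℝ => jacobiScale p.1 β n p.2) (Ici 0 ×ˢ univ) := by
  have hparam : Continuous fun p : ℝ × ℝ => jacobiParam p.1 β n := by
    unfold jacobiParam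
    fun_prop
  have hturn : ContinuousOn (fun p : ℝ × ℝ => jacobiTurningPoint p.1 β n) (Ici 0 ×ˢ univ) := by
    refine .sub (by fun_prop) (.div (by fun_prop) ((hparam.pow 2).const_mul 2).continuousOn
      fun p hp => ?_)
    have := jacobiParam_pos (n := n) hp.1 hβ
    positivity
  have hpow : Continuous fun p : ℝ × ℝ => p.1 ^ ((4 : ℝ) / 3) :=
    .rpow_const continuous_fst fun _ => .inr (by norm_num)
  exact ((hparam.pow 2).continuousOn.mul (continuous_snd.continuousOn.sub hturn).abs).add
    hpow.continuousOn

lemma exists_pow_four_mul_jacobiScale_le_of_fixed_degree (hβ : 0 ≤ β) (n : ℕ) (A : ℝ) :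
    ∃ C : ℝ, ∀ α ∈ Icc 1 A, ∀ x ∈ Icc (-1) 1,
      (((1 - x) / 2) ^ (α / 2) * jacobi α β n x) ^ 4 * jacobiScale α β n x ≤ C := by
  have hweight : ContinuousOn (fun p : ℝ × ℝ => ((1 - p.2) / 2) ^ (p.1 / 2))
      (Icc 1 A ×ˢ Icc (-1) 1) :=
    .rpow (by fun_prop) (by fun_prop) fun p hp => .inr (by linarith [hp.1.1])
  have hscale := (continuousOn_uncurry_jacobiScale hβ n).mono <|
    prod_mono (Icc_subset_Ici_self.trans (Ici_subset_Ici.2 zero_le_one) : Icc 1 A ⊆ Ici 0)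
      (subset_univ (Icc (-1) 1))
  have hcont : ContinuousOn (fun p : ℝ × ℝ =>
      (((1 - p.2) / 2) ^ (p.1 / 2) * jacobi p.1 β n p.2) ^ 4 * jacobiScale p.1 β n p.2)
      (Icc 1 A ×ˢ Icc (-1) 1) :=
    ((hweight.mul (continuous_uncurry_jacobi β n).continuousOn).pow 4).mul hscale
  obtain ⟨C, hC⟩ := (isCompact_Icc.prod isCompact_Icc).exists_bound_of_continuousOn hcont
  exact ⟨C, fun α hα x hx => (le_abs_self _).trans (hC (α, x) (mk_mem_prod hα hx))⟩

lemma exists_pow_four_mul_jacobiScale_le (hβ : 0 ≤ β) (hε : 0 < ε) (hc : 0 < c) :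
    ∃ C : ℝ, ∀ (α : ℝ) (n : ℕ), 1 ≤ α → α ≤ c * (1 + n) → ∀ x ∈ Icc (-1 + ε) 1,
      (((1 - x) / 2) ^ (α / 2) * jacobi α β n x) ^ 4 * jacobiScale α β n x ≤ C := by
  obtain ⟨N, C, hC⟩ := exists_jacobiFun_pow_four_mul_jacobiScale_le_of_large_degree hβ hε hc
  choose K hK using fun n : ℕ =>
    exists_pow_four_mul_jacobiScale_le_of_fixed_degree hβ n (c * (1 + n))
  obtain ⟨B, hB⟩ := ((finite_lt_nat N).image K).bddAbove
  refine ⟨max (C / ((ε / 2) ^ (β / 2)) ^ 4) B, fun α n hα hαc x hx => ?_⟩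
  rcases lt_or_ge n N with hn | hn
  · exact le_max_of_le_right ((hK n α ⟨hα, hαc⟩ x ⟨by linarith [hx.1], hx.2⟩).trans
      (hB (mem_image_of_mem K hn)))
  refine le_max_of_le_left ((le_div_iff₀ (by positivity)).2 ?_)
  have hscale : 0 ≤ jacobiScale α β n x := by
    rw [jacobiScale]
    positivity
  have hx' : ε / 2 ≤ (1 + x) / 2 := by linarith [hx.1]
  calc _ ≤ (((1 - x) / 2) ^ (α / 2) * jacobi α β n x) ^ 4 * jacobiScale α β n x *
        (((1 + x) / 2) ^ (β / 2)) ^ 4 := by gcongr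
    _ = jacobiFun α β n x ^ 4 * jacobiScale α β n x := by
        rw [jacobiFun, jacobiHalfWeight]
        ring
    _ ≤ C := hC n hn α hα hαc x hx

lemma abs_le_rpow_mul_rpow_of_pow_four_mul_le {g R C : ℝ} (hR : 0 < R) (h : g ^ 4 * R ≤ C) :
    |g| ≤ C ^ (1 / 4 : ℝ) * R ^ (-(1 / 4) : ℝ) := by
  have hC : 0 ≤ C := le_trans (by positivity) h
  calc |g| = (g ^ 4) ^ (1 / 4 : ℝ) := by
        rw [← Even.pow_abs (by decide), ← Real.rpow_natCast_mul (abs_nonneg g)]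
        norm_num
    _ ≤ (C / R) ^ (1 / 4 : ℝ) := by
        gcongr
        exact (le_div_iff₀ hR).2 h
    _ = C ^ (1 / 4 : ℝ) * R ^ (-(1 / 4) : ℝ) := by
        rw [Real.div_rpow hC hR.le, Real.rpow_neg hR.le, div_eq_mul_inv]

end UniformBound

theorem stmt9_general {β ε c : ℝ} (hβ : 0 ≤ β) (hε : 0 < ε) (hc : 0 < c) :
    ∃ C : ℝ, 0 < C ∧ ∀ (α : ℝ) (n : ℕ), 1 ≤ α → α ≤ c * (1 + n) → ∀ x ∈ Icc (-1 + ε) 1,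
      |((1 - x) / 2) ^ (α / 2) * jacobi α β n x| ≤
        C * (jacobiParam α β n ^ 2 * |x - jacobiTurningPoint α β n| +
          α ^ ((4 : ℝ) / 3)) ^ (-(1 / 4) : ℝ) := by
  obtain ⟨C, hC⟩ := exists_pow_four_mul_jacobiScale_le hβ hε hc
  refine ⟨max C 1 ^ (1 / 4 : ℝ), by positivity, fun α n hα hαc x hx => ?_⟩
  have : 0 < α := by linarith
  exact abs_le_rpow_mul_rpow_of_pow_four_mul_le (by positivity)
    (le_max_of_le_left (hC α n hα hαc x hx))

theorem stmt9 (β : ℕ) (ε : ℝ) (hε : ε ∈ Set.Ioo (0 : ℝ) 2) (c : ℝ) (hc : 0 < c) :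
    ∃ C : ℝ, 0 < C ∧
      ∀ α n : ℕ, 1 ≤ α → (α : ℝ) ≤ c * (1 + (n : ℝ)) →
        ∀ x ∈ Set.Icc (-1 + ε) (1 : ℝ),
          |((1 - x) / 2) ^ ((α : ℝ) / 2) * jacobi (α : ℝ) (β : ℝ) n x|
            ≤ C * (((n : ℝ) + ((α : ℝ) + (β : ℝ) + 1) / 2) ^ 2 *
                    |x - (1 - (α : ℝ) ^ 2 / (2 * ((n : ℝ) + ((α : ℝ) + (β : ℝ) + 1) / 2) ^ 2))| +
                  (α : ℝ) ^ ((4 : ℝ) / 3)) ^ (-(1 / 4) : ℝ) := by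
  obtain ⟨C, hC, h⟩ := stmt9_general β.cast_nonneg hε.1 hc
  exact ⟨C, hC, fun α n hα => h α n (by exact_mod_cast hα)⟩
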